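/- arXiv:1704.08789 — 2 statements merged into one kernel-verified Lean document; each statement's English description precedes it below -/
import Mathlib

section
/- Let M be a compact metric space with a finite good covering 𝒰 = {U_1,…,U_N}, and fix L > 6. Then there exists a Lipschitz strong deformation retraction Φ : M(p) × [0,1] → M(p) of M(p) onto D(𝒰) × {0} = {(θ, [x,0]) : (θ,x) ∈ D(𝒰)}. -/
open Metric Set

/-- The cone distance on `M × [0,L]` (representatives of the cone
`K(M) = M × [0,L] / (M × {L})`). Two representatives are identified in the cone iff their
cone distance is `0`. -/
noncomputable def coneDist {M : Type*} [PseudoMetricSpace M] (L : ℝ) (c c' : M × ℝ) : ℝ :=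
  Real.sqrt ((L - c.2) ^ 2 + (L - c'.2) ^ 2 -
    2 * (L - c.2) * (L - c'.2) * Real.cos (min Real.pi (dist c.1 c'.1)))

/-- The distance of the mapping cylinder `M(p) ⊆ |𝒩_𝒰| × K(M)`:
`d((θ,c),(θ',c'))² = d(θ,θ')² + d_K(c,c')²`, on representatives `(θ, x, t)`. -/
noncomputable def cylDist {M : Type*} [PseudoMetricSpace M] {N : ℕ} (L : ℝ)
    (z w : (Fin N → ℝ) × M × ℝ) : ℝ :=
  Real.sqrt (dist z.1 w.1 ^ 2 + coneDist L z.2 w.2 ^ 2)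

/-- A subset `V` of a metric space admits a *Lipschitz strong deformation retraction to a
point*. -/
def IsLipSDRToPoint {X : Type*} [MetricSpace X] (V : Set X) : Prop :=
  ∃ (p : V) (F : V × unitInterval → V) (K : NNReal),
    LipschitzWith K F ∧ (∀ x, F (x, 0) = x) ∧ (∀ x, F (x, 1) = p) ∧ (∀ t, F (p, t) = p)

/-- A locally finite open covering is *good*. -/
def IsGoodCovering {X : Type*} [MetricSpace X] {J : Type*} (U : J → Set X) : Prop :=
  (∀ j, IsOpen (U j)) ∧ (⋃ j, U j) = univ ∧ LocallyFinite U ∧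
    (∀ j, IsCompact (closure (U j))) ∧
    ∀ s : Finset J, s.Nonempty → (⋂ j ∈ s, U j).Nonempty → IsLipSDRToPoint (⋂ j ∈ s, U j)

/-- The geometric realization of the nerve of a finite covering, with the sup metric. -/
def NerveSet {M : Type*} [MetricSpace M] {N : ℕ} (U : Fin N → Set M) : Set (Fin N → ℝ) :=
  {θ | (∀ j, θ j ∈ Icc (0:ℝ) 1) ∧ ∑ j, θ j = 1 ∧ (⋂ j ∈ {j | θ j ≠ 0}, U j).Nonempty}

/-- `(θ, x, t)` represents a point of the mapping cylinder
`M(p) = ⋃_σ σ × K(U_σ) ⊆ |𝒩_𝒰| × K(M)`: `θ` lies in the nerve, `t ∈ [0,L]`, and there is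
a simplex `s` of the nerve containing the support of `θ` such that either `t = L` (the
vertex of the cone) or `x ∈ U_s`. -/
def InCyl {M : Type*} [MetricSpace M] {N : ℕ} (U : Fin N → Set M) (L : ℝ)
    (z : (Fin N → ℝ) × M × ℝ) : Prop :=
  z.1 ∈ NerveSet U ∧ z.2.2 ∈ Icc 0 L ∧
    ∃ s : Finset (Fin N), (∀ j, z.1 j ≠ 0 → j ∈ s) ∧ (⋂ j ∈ s, U j).Nonempty ∧
      (z.2.2 = L ∨ z.2.1 ∈ ⋂ j ∈ s, U j)


/-- `(θ, x, t)` represents a point of `D(𝒰) × {0} ⊆ M(p)`: `θ` is in the nerve, `t = 0`,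
and `x ∈ ⋂_{j ∈ supp θ} U_j`. -/
def InDZero {M : Type*} [MetricSpace M] {N : ℕ} (U : Fin N → Set M)
    (z : (Fin N → ℝ) × M × ℝ) : Prop :=
  z.1 ∈ NerveSet U ∧ z.2.2 = 0 ∧ z.2.1 ∈ ⋂ j ∈ {j | z.1 j ≠ 0}, U j


/-!
The open simplices of the nerve are removed one at a time, the larger ones first, until only the
base of the cylinder is left. Over the interior of a simplex `σ` the cylinder is the product of `σ`
with the cone over `U_σ`. A pair `(θ, c)` there is pushed radially away from the barycenter of `σ`
while `c` moves down the cone, until `θ` reaches the boundary of `σ` or `c` reaches the base.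
In the first case the set of admissible cone points grows, so the motion stays in the cylinder.

The difficulty is the vertex of the cone, where the coordinate in `M` is undetermined: going
straight down is not Lipschitz there. One therefore contracts `U_σ` to its center before lowering
the height. Running the contraction costs distance proportional to the width of the cone, and by
the time this width has doubled the contraction is over, so that nearby points descend together.
-/

/-! ### Lipschitz strong deformation retractions -/

section Retraction

variable {α β : Type*} [PseudoMetricSpace α] [PseudoMetricSpace β]

theorem lipschitzOnWith_ite_time_le {f g : α × unitInterval → β} {Kf Kg : NNReal} {X : Set α}
    (hf : LipschitzOnWith Kf f (X ×ˢ univ)) (hg : LipschitzOnWith Kg g (X ×ˢ univ))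
    (c : unitInterval) (hfg : ∀ x ∈ X, f (x, c) = g (x, c)) :
    LipschitzOnWith (Kf + Kg) (fun p => if p.2 ≤ c then f p else g p) (X ×ˢ univ) := by
  have crossing : ∀ {x y : α} {s t : unitInterval}, x ∈ X → y ∈ X → s ≤ c → c ≤ t →
      dist (f (x, s)) (g (y, t)) ≤ (Kf + Kg) * dist (x, s) (y, t) := by
    intro x y s t hx hy hsc hct
    have before : dist (x, s) (y, c) ≤ dist (x, s) (y, t) :=
      max_le_max le_rfl (Real.dist_left_le_of_mem_uIcc (mem_uIcc_of_le hsc hct))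
    have after : dist (y, c) (y, t) ≤ dist (x, s) (y, t) := by
      refine (dist_prod_same_left ..).trans_le (le_trans ?_ (le_max_right ..))
      exact Real.dist_right_le_of_mem_uIcc (mem_uIcc_of_le hsc hct)
    calc dist (f (x, s)) (g (y, t))
        ≤ dist (f (x, s)) (f (y, c)) + dist (g (y, c)) (g (y, t)) := by
          rw [← hfg y hy]; exact dist_triangle ..
      _ ≤ Kf * dist (x, s) (y, c) + Kg * dist (y, c) (y, t) :=
          add_le_add (hf.dist_le_mul _ ⟨hx, trivial⟩ _ ⟨hy, trivial⟩)
            (hg.dist_le_mul _ ⟨hy, trivial⟩ _ ⟨hy, trivial⟩)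
      _ ≤ Kf * dist (x, s) (y, t) + Kg * dist (x, s) (y, t) := by gcongr
      _ = _ := by ring
  refine LipschitzOnWith.of_dist_le_mul fun ⟨x, s⟩ hx ⟨y, t⟩ hy => ?_
  rw [NNReal.coe_add]
  dsimp only
  split_ifs with hs ht ht
  · refine (hf.dist_le_mul _ hx _ hy).trans ?_
    gcongr
    exact le_add_of_nonneg_right Kg.2
  · exact crossing hx.1 hy.1 hs (not_le.mp ht).le
  · rw [dist_comm, dist_comm (x, s)]
    exact crossing hy.1 hx.1 ht (not_le.mp hs).le
  · refine (hg.dist_le_mul _ hx _ hy).trans ?_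
    gcongr
    exact le_add_of_nonneg_left Kf.2

/-- `A` is a Lipschitz strong deformation retract of `X`, for subsets `A ⊆ X` of an ambient
pseudometric space. The homotopy is defined on the whole ambient space, with junk values
off `X`. -/
def IsLipSDR (X A : Set α) : Prop :=
  A ⊆ X ∧ ∃ (H : α × unitInterval → α) (K : NNReal), LipschitzOnWith K H (X ×ˢ univ) ∧
    MapsTo H (X ×ˢ univ) X ∧ (∀ x ∈ X, H (x, 0) = x) ∧ (∀ x ∈ X, H (x, 1) ∈ A) ∧
    ∀ a ∈ A, ∀ t, H (a, t) = a

theorem IsLipSDR.refl (X : Set α) : IsLipSDR X X :=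
  ⟨Subset.rfl, Prod.fst, 1, LipschitzWith.prod_fst.lipschitzOnWith, fun _ h => h.1,
    fun _ _ => rfl, fun _ h => h, fun _ _ _ => rfl⟩

theorem lipschitzWith_projIcc_two_mul_sub (b : ℝ) :
    LipschitzWith 2 fun s : unitInterval => projIcc (0 : ℝ) 1 zero_le_one (2 * s - b) := by
  refine LipschitzWith.of_dist_le_mul fun s t => ?_
  calc dist (projIcc (0 : ℝ) 1 zero_le_one (2 * s - b)) (projIcc 0 1 zero_le_one (2 * t - b))
      ≤ |(2 * s - b) - (2 * t - b)| := by
        simpa using! (LipschitzWith.projIcc zero_le_one).dist_le_mul (2 * s - b : ℝ) (2 * t - b)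
    _ = 2 * dist s t := by
        rw [sub_sub_sub_cancel_right, ← mul_sub, abs_mul, abs_two, Subtype.dist_eq, Real.dist_eq]

theorem lipschitzOnWith_prodMap {α' β' : Type*} [PseudoMetricSpace α'] [PseudoMetricSpace β']
    {f : α → β} {g : α' → β'} {Kf Kg : NNReal} {X : Set α}
    (hf : LipschitzOnWith Kf f X) (hg : LipschitzWith Kg g) :
    LipschitzOnWith (max (Kf * 1) (Kg * 1)) (Prod.map f g) (X ×ˢ univ) :=
  (hf.comp LipschitzWith.prod_fst.lipschitzOnWith fun _ hp => hp.1).prodMk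
    (hg.comp LipschitzWith.prod_snd).lipschitzOnWith

theorem IsLipSDR.trans {X Y Z : Set α} (hXY : IsLipSDR X Y) (hYZ : IsLipSDR Y Z) :
    IsLipSDR X Z := by
  obtain ⟨hYX, H, K, hH, hHX, hH0, hH1, hHY⟩ := hXY
  obtain ⟨hZY, H', K', hH', hHY', hH0', hH1', hHZ⟩ := hYZ
  let c : unitInterval := ⟨1 / 2, by norm_num, by norm_num⟩
  let early (s : unitInterval) : unitInterval := projIcc 0 1 zero_le_one (2 * s - 0 : ℝ)
  let late (s : unitInterval) : unitInterval := projIcc 0 1 zero_le_one (2 * s - 1 : ℝ)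
  have early_zero : early 0 = 0 := projIcc_of_le_left _ (by simp)
  have early_half : early c = 1 := projIcc_of_right_le _ (by norm_num [c])
  have late_half : late c = 0 := projIcc_of_le_left _ (by norm_num [c])
  have late_one : late 1 = 1 := projIcc_of_right_le _ (by norm_num)
  have hfirst := hH.comp (lipschitzOnWith_prodMap LipschitzWith.id.lipschitzOnWith
    (lipschitzWith_projIcc_two_mul_sub 0)) fun p hp => ⟨hp.1, trivial⟩
  have hend := hH.comp (LipschitzWith.prodMk_right (1 : unitInterval)).lipschitzOnWith
    fun x (hx : x ∈ X) => ⟨hx, trivial⟩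
  have hsecond := hH'.comp (lipschitzOnWith_prodMap hend (lipschitzWith_projIcc_two_mul_sub 1))
    fun p hp => ⟨hH1 _ hp.1, trivial⟩
  refine ⟨hZY.trans hYX, fun p => if p.2 ≤ c then H (p.1, early p.2) else
    H' (H (p.1, 1), late p.2), _, lipschitzOnWith_ite_time_le hfirst hsecond c ?_, ?_, ?_, ?_, ?_⟩
  · intro x hx
    exact (congrArg (fun s => H (x, s)) early_half).trans
      ((hH0' _ (hH1 x hx)).symm.trans (congrArg (fun s => H' (H (x, 1), s)) late_half).symm)
  · rintro ⟨x, s⟩ ⟨hx, -⟩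
    dsimp only
    split_ifs
    exacts [hHX ⟨hx, trivial⟩, hYX (hHY' ⟨hH1 x hx, trivial⟩)]
  · intro x hx
    simp only [unitInterval.nonneg', if_true, early_zero, hH0 x hx]
  · intro x hx
    have : ¬ (1 : unitInterval) ≤ c := by rw [← Subtype.coe_le_coe]; norm_num [c]
    simp only [this, if_false, late_one, hH1' _ (hH1 x hx)]
  · intro a ha s
    dsimp only
    split_ifs
    · exact hHY a (hZY ha) _
    · rw [hHY a (hZY ha), hHZ a ha]

end Retraction

/-! ### The cone and the cylinder as metric spaces -/

section ConeModel

variable {M : Type*} [PseudoMetricSpace M] {L : ℝ}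

/-- The pairs `(x, t)`, metrized so as to represent the cone over `M` of height `L` up to
bi-Lipschitz equivalence. In contrast with `coneDist`, the distance is built from the metric
of `M` by lattice operations and products only. -/
structure ConeModel (M : Type*) (L : ℝ) where
  point : M
  height : ℝ

/-- The representative of a point of the cone on which `coneDist` is evaluated. -/
def ConeModel.toProd (c : ConeModel M L) : M × ℝ := (c.point, c.height)

theorem abs_sub_add_min_width_mul_le {t t' t'' δ δ' δ'' : ℝ} (h0' : 0 ≤ δ') (h0'' : 0 ≤ δ'')
    (hδ : δ ≤ δ' + δ'') (hδ2 : δ ≤ 2) :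
    |t - t''| + min (max 0 (L - t)) (max 0 (L - t'')) * δ ≤
      (|t - t'| + min (max 0 (L - t)) (max 0 (L - t')) * δ') +
        (|t' - t''| + min (max 0 (L - t')) (max 0 (L - t'')) * δ'') := by
  have detour : |t - t''| +
      (min (max 0 (L - t)) (max 0 (L - t'')) - max 0 (L - t')) * 2 ≤ |t - t'| + |t' - t''| := by
    grind
  set r := max 0 (L - t)
  set r' := max 0 (L - t')
  set r'' := max 0 (L - t'')
  have : 0 ≤ r' := le_max_left ..
  have : 0 ≤ min r r'' := le_min (le_max_left ..) (le_max_left ..)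
  rcases le_or_gt (min r r'') r' with h | h
  · calc |t - t''| + min r r'' * δ
        ≤ (|t - t'| + |t' - t''|) + (min r r'' * δ' + min r r'' * δ'') := by
          rw [← mul_add]; gcongr; exact abs_sub_le ..
      _ ≤ (|t - t'| + |t' - t''|) + (min r r' * δ' + min r' r'' * δ'') :=
          add_le_add_right (add_le_add
            (mul_le_mul_of_nonneg_right (le_min (min_le_left ..) h) h0')
            (mul_le_mul_of_nonneg_right (le_min h (min_le_right ..)) h0'')) _
      _ = _ := by ring
  -- The detour through the thinner level `t'` costs at least twice the width lost there, which
  -- pays for the loss because horizontal distances are truncated at `2`.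
  · rw [min_eq_right (h.trans_le (min_le_left ..)).le,
      min_eq_left (h.trans_le (min_le_right ..)).le]
    calc |t - t''| + min r r'' * δ = |t - t''| + (min r r'' - r') * δ + r' * δ := by ring
      _ ≤ |t - t''| + (min r r'' - r') * 2 + r' * (δ' + δ'') := by gcongr
      _ ≤ |t - t'| + |t' - t''| + r' * (δ' + δ'') := by gcongr
      _ = _ := by ring

/-- The pseudometric `|t - t'| + w * min 2 (dist x x')` of the cone model, where the weight `w` is
the smaller of the widths `L - t` and `L - t'`. -/
noncomputable instance ConeModel.instPseudoMetricSpace : PseudoMetricSpace (ConeModel M L) where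
  dist c c' := |c.height - c'.height| +
    min (max 0 (L - c.height)) (max 0 (L - c'.height)) * min 2 (dist c.point c'.point)
  dist_self c := by simp
  dist_comm c c' := by
    simp only [abs_sub_comm c.height, min_comm (max 0 (L - c.height)), dist_comm c.point]
  dist_triangle c c' c'' := by
    refine abs_sub_add_min_width_mul_le (by positivity) (by positivity) ?_ (min_le_left ..)
    grind [dist_triangle c.point c'.point c''.point, dist_nonneg (x := c.point) (y := c'.point),
      dist_nonneg (x := c'.point) (y := c''.point)]

theorem ConeModel.dist_of_le {c c' : ConeModel M L} (h : c.height ≤ L) (h' : c'.height ≤ L) :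
    dist c c' = |c.height - c'.height| +
      min (L - c.height) (L - c'.height) * min 2 (dist c.point c'.point) := by
  change |c.height - c'.height| + min (max 0 (L - c.height)) (max 0 (L - c'.height)) *
    min 2 (dist c.point c'.point) = _
  rw [max_eq_right (sub_nonneg.mpr h), max_eq_right (sub_nonneg.mpr h')]

theorem sq_le_two_mul_one_sub_cos {d : ℝ} (hd : 0 ≤ d) :
    (min 2 d / 2) ^ 2 ≤ 2 * (1 - Real.cos (min Real.pi d)) := by
  have hα : min 2 d ≤ min Real.pi d :=
    min_le_min_right _ (by linarith [Real.pi_gt_three])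
  have hδ : 0 ≤ min 2 d := le_min zero_le_two hd
  have hcos := Real.cos_le_one_sub_mul_cos_sq (x := min Real.pi d)
    ((abs_of_nonneg (hδ.trans hα)).trans_le (min_le_left ..))
  have hπ : (1 : ℝ) / 4 ≤ 2 * (2 / Real.pi ^ 2) := by
    rw [← mul_div_assoc, div_le_div_iff₀ (by norm_num) (by positivity)]
    nlinarith [Real.pi_le_four, Real.pi_pos]
  calc (min 2 d / 2) ^ 2 = 1 / 4 * min 2 d ^ 2 := by ring
    _ ≤ 2 * (2 / Real.pi ^ 2) * min Real.pi d ^ 2 := by gcongr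
    _ ≤ 2 * (1 - Real.cos (min Real.pi d)) := by linarith

theorem two_mul_one_sub_cos_le_sq {d : ℝ} (hd : 0 ≤ d) :
    2 * (1 - Real.cos (min Real.pi d)) ≤ (2 * min 2 d) ^ 2 := by
  have : 0 ≤ min Real.pi d := le_min Real.pi_pos.le hd
  have hδ : min Real.pi d ≤ 2 * min 2 d := by grind [Real.pi_le_four]
  calc 2 * (1 - Real.cos (min Real.pi d)) ≤ min Real.pi d ^ 2 := by
        linarith [Real.one_sub_sq_div_two_le_cos (x := min Real.pi d)]
    _ ≤ (2 * min 2 d) ^ 2 := by gcongr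

theorem coneDist_toProd (c c' : ConeModel M L) :
    coneDist L c.toProd c'.toProd = Real.sqrt (|c.height - c'.height| ^ 2 +
      (L - c.height) * (L - c'.height) *
        (2 * (1 - Real.cos (min Real.pi (dist c.point c'.point))))) := by
  rw [coneDist, sq_abs]
  simp only [ConeModel.toProd]
  ring_nf

theorem coneDist_le_two_mul_dist {c c' : ConeModel M L} (h : c.height ≤ L)
    (h' : c'.height ≤ L) :
    coneDist L c.toProd c'.toProd ≤ 2 * dist c c' := by
  have hw : 0 ≤ min (L - c.height) (L - c'.height) :=
    le_min (sub_nonneg.mpr h) (sub_nonneg.mpr h')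
  rw [coneDist_toProd, Real.sqrt_le_left (by positivity), ConeModel.dist_of_le h h']
  have hwidth : (L - c.height) * (L - c'.height) =
      min (L - c.height) (L - c'.height) ^ 2 +
        min (L - c.height) (L - c'.height) * |c.height - c'.height| := by
    rcases le_total c.height c'.height with hle | hle
    · rw [min_eq_right (by linarith), abs_of_nonpos (by linarith)]; ring
    · rw [min_eq_left (by linarith), abs_of_nonneg (by linarith)]; ring
  set w := min (L - c.height) (L - c'.height)
  set Δ := |c.height - c'.height|
  have : 0 ≤ Δ := abs_nonneg _
  set δ := min 2 (dist c.point c'.point)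
  have : 0 ≤ δ := le_min zero_le_two dist_nonneg
  have hδ2 : δ ≤ 2 := min_le_left ..
  calc Δ ^ 2 + (L - c.height) * (L - c'.height) * _
      ≤ Δ ^ 2 + (w ^ 2 + w * Δ) * (2 * δ) ^ 2 := by
        rw [hwidth]; gcongr; exact two_mul_one_sub_cos_le_sq dist_nonneg
    _ = Δ ^ 2 + 4 * w ^ 2 * δ ^ 2 + 4 * w * Δ * δ * δ := by ring
    _ ≤ Δ ^ 2 + 4 * w ^ 2 * δ ^ 2 + 4 * w * Δ * δ * 2 := by gcongr
    _ ≤ (2 * (Δ + w * δ)) ^ 2 := by nlinarith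

theorem dist_le_three_mul_coneDist {c c' : ConeModel M L} (h : c.height ≤ L)
    (h' : c'.height ≤ L) :
    dist c c' ≤ 3 * coneDist L c.toProd c'.toProd := by
  have : 0 ≤ min (L - c.height) (L - c'.height) :=
    le_min (sub_nonneg.mpr h) (sub_nonneg.mpr h')
  have : 0 ≤ min 2 (dist c.point c'.point) := le_min zero_le_two dist_nonneg
  have hchord := sq_le_two_mul_one_sub_cos (dist_nonneg (x := c.point) (y := c'.point))
  have hvert : |c.height - c'.height| ≤ coneDist L c.toProd c'.toProd := by
    rw [coneDist_toProd]
    refine Real.le_sqrt_of_sq_le (le_add_of_nonneg_right ?_)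
    exact mul_nonneg (mul_nonneg (by linarith) (by linarith)) ((sq_nonneg _).trans hchord)
  have hhor : min (L - c.height) (L - c'.height) * (min 2 (dist c.point c'.point) / 2) ≤
      coneDist L c.toProd c'.toProd := by
    rw [coneDist_toProd]
    refine Real.le_sqrt_of_sq_le (le_add_of_nonneg_of_le (sq_nonneg _) ?_)
    rw [mul_pow, sq (min _ _)]
    gcongr
    exacts [min_le_left .., min_le_right ..]
  rw [ConeModel.dist_of_le h h']
  linarith

/-- The ambient space of the mapping cylinder, with the sup of the distances of the two factors.
-/
abbrev CylModel (N : ℕ) (M : Type*) (L : ℝ) : Type _ := (Fin N → ℝ) × ConeModel M L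

variable {N : ℕ} {z w : CylModel N M L}

theorem cylDist_le_three_mul_dist (hz : z.2.height ≤ L) (hw : w.2.height ≤ L) :
    cylDist L (z.1, z.2.toProd) (w.1, w.2.toProd) ≤ 3 * dist z w := by
  have hcone := coneDist_le_two_mul_dist hz hw
  have hsimplex : dist z.1 w.1 ≤ dist z w := le_max_left ..
  have hmodel : dist z.2 w.2 ≤ dist z w := le_max_right ..
  refine Real.sqrt_le_iff.mpr ⟨by positivity, ?_⟩
  calc dist z.1 w.1 ^ 2 + coneDist L z.2.toProd w.2.toProd ^ 2
      ≤ dist z w ^ 2 + (2 * dist z w) ^ 2 := by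
        gcongr
        · exact Real.sqrt_nonneg _
        · exact hcone.trans (by gcongr)
    _ ≤ (3 * dist z w) ^ 2 := by nlinarith [sq_nonneg (dist z w)]

theorem dist_le_three_mul_cylDist (hz : z.2.height ≤ L) (hw : w.2.height ≤ L) :
    dist z w ≤ 3 * cylDist L (z.1, z.2.toProd) (w.1, w.2.toProd) := by
  have hsimplex : dist z.1 w.1 ≤ cylDist L (z.1, z.2.toProd) (w.1, w.2.toProd) :=
    Real.le_sqrt_of_sq_le (le_add_of_nonneg_right (sq_nonneg _))
  have hcone : coneDist L z.2.toProd w.2.toProd ≤ cylDist L (z.1, z.2.toProd) (w.1, w.2.toProd) :=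
    Real.le_sqrt_of_sq_le (le_add_of_nonneg_left (sq_nonneg _))
  refine max_le ?_ ((dist_le_three_mul_coneDist hz hw).trans (by gcongr))
  linarith [dist_nonneg (x := z.1) (y := w.1)]

theorem cylDist_self (z : CylModel N M L) (hz : z.2.height ≤ L) :
    cylDist L (z.1, z.2.toProd) (z.1, z.2.toProd) = 0 :=
  le_antisymm (by simpa using cylDist_le_three_mul_dist hz hz) (Real.sqrt_nonneg _)

end ConeModel

/-! ### Sliding down the cone over a contractible set -/

section Slide

variable {M : Type*} {F : M × unitInterval → M} {p : M} {K : NNReal} {L : ℝ}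

/-- Given a contraction `F`, slides the point `c = (x, t)` of the cone down by the amount `m`: the
coordinate `x` is contracted by `m = L / 4`, and the height is lowered from `m = t / 2` on, to
reach `0` at `m = t`. Near the vertex, where `t > L / 2`, the contraction comes first. -/
noncomputable def slide (L : ℝ) (F : M × unitInterval → M) (q : ConeModel M L × ℝ) :
    ConeModel M L :=
  ⟨F (q.1.point, projIcc 0 1 zero_le_one (4 * q.2 / L)),
    min q.1.height (2 * (q.1.height - q.2))⟩

theorem slide_zero (hF0 : ∀ x, F (x, 0) = x) {c : ConeModel M L} (hc : 0 ≤ c.height) :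
    slide L F (c, 0) = c := by
  simp only [slide, mul_zero, zero_div, sub_zero, projIcc_left]
  rw [min_eq_left (by linarith)]
  exact congrArg (ConeModel.mk · c.height) (hF0 c.point)

theorem slide_height_mem_Icc {c : ConeModel M L} {m : ℝ} (hc : c.height ∈ Icc 0 L)
    (hm : m ≤ c.height) : (slide L F (c, m)).height ∈ Icc 0 L :=
  ⟨le_min hc.1 (by linarith), (min_le_left ..).trans hc.2⟩

theorem slide_height_self {c : ConeModel M L} (hc : 0 ≤ c.height) :
    (slide L F (c, c.height)).height = 0 := by
  simpa [slide] using hc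

/-- `V` is contractible by a Lipschitz homotopy, which need not fix the center. -/
def IsLipContractible [PseudoMetricSpace M] (V : Set M) : Prop :=
  ∃ (p : V) (F : V × unitInterval → V) (K : NNReal),
    LipschitzWith K F ∧ (∀ x, F (x, 0) = x) ∧ ∀ x, F (x, 1) = p

theorem IsLipSDRToPoint.isLipContractible [MetricSpace M] {V : Set M} (hV : IsLipSDRToPoint V) :
    IsLipContractible V :=
  let ⟨p, F, K, hF, hF0, hF1, _⟩ := hV
  ⟨p, F, K, hF, hF0, hF1⟩

variable [PseudoMetricSpace M] {V : Set M}

/-- `F` contracts `V` to the center `p` and is extended to the ambient space so that, at positive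
times, all points are in `V`. Away from `V` the extension is not continuous. -/
structure IsExtendedContraction (V : Set M) (F : M × unitInterval → M) (p : M) (K : NNReal) :
    Prop where
  lipschitzOnWith : LipschitzOnWith K F (V ×ˢ univ)
  zero : ∀ x, F (x, 0) = x
  one : ∀ x, F (x, 1) = p
  mem : ∀ x a, x ∈ V ∨ a ≠ 0 → F (x, a) ∈ V

theorem IsLipContractible.exists_isExtendedContraction (hV : IsLipContractible V) :
    ∃ F p K, IsExtendedContraction V F p K := by
  classical
  obtain ⟨p, F, K, hF, hF0, hF1⟩ := hV
  let G (q : M × unitInterval) : M :=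
    if hx : q.1 ∈ V then F (⟨q.1, hx⟩, q.2) else if q.2 = 0 then q.1 else p
  have inside {x : M} (hx : x ∈ V) (a : unitInterval) : G (x, a) = F (⟨x, hx⟩, a) := dif_pos hx
  have outside {x : M} (hx : x ∉ V) (a : unitInterval) : G (x, a) = if a = 0 then x else p :=
    dif_neg hx
  refine ⟨G, p, K, ?_, fun x => ?_, fun x => ?_, fun x a hxa => ?_⟩
  · refine LipschitzOnWith.of_dist_le_mul fun ⟨x, a⟩ hx ⟨y, b⟩ hy => ?_
    rw [inside hx.1, inside hy.1]
    exact hF.dist_le_mul (⟨x, hx.1⟩, a) (⟨y, hy.1⟩, b)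
  · by_cases hx : x ∈ V
    · rw [inside hx, hF0]
    · rw [outside hx, if_pos rfl]
  · by_cases hx : x ∈ V
    · rw [inside hx, hF1]
    · rw [outside hx, if_neg one_ne_zero]
  · by_cases hx : x ∈ V
    · rw [inside hx]; exact Subtype.coe_prop _
    · rw [outside hx, if_neg (hxa.resolve_left hx)]; exact p.2

theorem IsExtendedContraction.min_two_dist_le (hF : IsExtendedContraction V F p K) {x y : M}
    (hx : x ∈ V) (hy : y ∈ V) (a b : unitInterval) :
    min 2 (dist (F (x, a)) (F (y, b))) ≤ max 1 (K : ℝ) * (min 2 (dist x y) + dist a b) := by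
  have hK : (1 : ℝ) ≤ max 1 (K : ℝ) := le_max_left ..
  have hxy : 0 ≤ dist x y := dist_nonneg
  have hab : 0 ≤ dist a b := dist_nonneg
  rcases le_total 2 (dist x y) with h | h
  · rw [min_eq_left h]
    exact (min_le_left ..).trans (by nlinarith)
  · rw [min_eq_right h]
    calc min 2 (dist (F (x, a)) (F (y, b))) ≤ K * max (dist x y) (dist a b) :=
          (min_le_right ..).trans (hF.lipschitzOnWith.dist_le_mul _ ⟨hx, trivial⟩ _ ⟨hy, trivial⟩)
      _ ≤ max 1 (K : ℝ) * (dist x y + dist a b) := by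
          gcongr
          exacts [le_max_right .., max_le_add_of_nonneg hxy hab]

theorem IsExtendedContraction.slide_point_mem (hF : IsExtendedContraction V F p K) (hL : 0 < L)
    {m : ℝ} (hm : 0 < m) (c : ConeModel M L) : (slide L F (c, m)).point ∈ V := by
  refine hF.mem _ _ (Or.inr fun h => ?_)
  have := (projIcc_eq_left zero_lt_one).mp h
  exact this.not_gt (by positivity)

theorem IsExtendedContraction.slide_point_eq_of_le_four_mul
    (hF : IsExtendedContraction V F p K) (hL : 0 < L) {c c' : ConeModel M L}
    {m m' : ℝ} (hm : L ≤ 4 * m) (hm' : L ≤ 4 * m') :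
    (slide L F (c, m)).point = (slide L F (c', m')).point := by
  have expired {n : ℝ} (hn : L ≤ 4 * n) (x : M) :
      F (x, projIcc 0 1 zero_le_one (4 * n / L)) = p := by
    rw [projIcc_of_right_le _ ((one_le_div hL).mpr hn)]
    exact hF.one x
  exact (expired hm _).trans (expired hm' _).symm

theorem IsExtendedContraction.width_mul_dist_slide_point_le (hF : IsExtendedContraction V F p K)
    (hL : 0 < L) {c c' : ConeModel M L} (hc : c.height ∈ Icc 0 L) (hc' : c'.height ∈ Icc 0 L)
    (hV : c.height = L ∨ c.point ∈ V) (hV' : c'.height = L ∨ c'.point ∈ V) (m m' : ℝ) :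
    min (L - c.height) (L - c'.height) *
        min 2 (dist (slide L F (c, m)).point (slide L F (c', m')).point) ≤
      max 1 (K : ℝ) * (min (L - c.height) (L - c'.height) * min 2 (dist c.point c'.point) +
        4 * |m - m'|) := by
  set w := min (L - c.height) (L - c'.height)
  have hw0 : 0 ≤ w := le_min (sub_nonneg.mpr hc.2) (sub_nonneg.mpr hc'.2)
  have hwL : w ≤ L := (min_le_left ..).trans (sub_le_self L hc.1)
  have vertex_or_mem : w = 0 ∨ c.point ∈ V ∧ c'.point ∈ V := by grind
  rcases vertex_or_mem with h | ⟨hx, hx'⟩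
  · rw [h, zero_mul, zero_mul]
    positivity
  · have clock : w * dist (projIcc 0 1 zero_le_one (4 * m / L) : unitInterval)
        (projIcc 0 1 zero_le_one (4 * m' / L)) ≤ 4 * |m - m'| := by
      calc _ ≤ L * |4 * m / L - 4 * m' / L| := by
            gcongr
            simpa using! (LipschitzWith.projIcc (zero_le_one' ℝ)).dist_le_mul (4 * m / L)
              (4 * m' / L)
        _ = 4 * |m - m'| := by
            rw [← sub_div, ← mul_sub, abs_div, abs_mul, abs_of_pos hL]
            field_simp
            rw [abs_of_pos four_pos, mul_comm]
    calc w * min 2 (dist (slide L F (c, m)).point (slide L F (c', m')).point)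
        ≤ w * (max 1 (K : ℝ) * (min 2 (dist c.point c'.point) +
            dist (projIcc 0 1 zero_le_one (4 * m / L) : unitInterval)
              (projIcc 0 1 zero_le_one (4 * m' / L)))) := by
          gcongr
          exact hF.min_two_dist_le hx hx' _ _
      _ ≤ max 1 (K : ℝ) * (w * min 2 (dist c.point c'.point) + 4 * |m - m'|) := by
          rw [mul_left_comm, mul_add]
          gcongr

theorem width_slide_le {t m : ℝ} (ht : t ≤ L) (hm : 2 * m ≤ L) :
    L - min t (2 * (t - m)) ≤ 2 * (L - t) := by
  grind

theorem IsExtendedContraction.slide_width_mul_dist_slide_point_le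
    (hF : IsExtendedContraction V F p K) (hL : 0 < L) {c c' : ConeModel M L}
    (hc : c.height ≤ L) (hc' : c'.height ≤ L) (m m' : ℝ) :
    min (L - (slide L F (c, m)).height) (L - (slide L F (c', m')).height) *
        min 2 (dist (slide L F (c, m)).point (slide L F (c', m')).point) ≤
      2 * (min (L - c.height) (L - c'.height) *
        min 2 (dist (slide L F (c, m)).point (slide L F (c', m')).point)) +
        4 * |c.height - c'.height| := by
  have hδ : 0 ≤ min 2 (dist (slide L F (c, m)).point (slide L F (c', m')).point) :=
    le_min zero_le_two dist_nonneg
  have hw : 0 ≤ min (L - c.height) (L - c'.height) :=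
    le_min (sub_nonneg.mpr hc) (sub_nonneg.mpr hc')
  have hδ2 := min_le_left 2 (dist (slide L F (c, m)).point (slide L F (c', m')).point)
  by_cases h : L ≤ 4 * m ∧ L ≤ 4 * m'
  · rw [hF.slide_point_eq_of_le_four_mul hL h.1 h.2, dist_self, min_eq_right zero_le_two]
    simp
  · have hwidth : min (L - (slide L F (c, m)).height) (L - (slide L F (c', m')).height) ≤
        2 * (min (L - c.height) (L - c'.height) + |c.height - c'.height|) := by
      rcases not_and_or.mp h with h | h
      · have := width_slide_le hc (m := m) (by linarith)
        grind [slide]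
      · have := width_slide_le hc' (m := m') (by linarith)
        grind [slide]
    nlinarith [abs_nonneg (c.height - c'.height), mul_le_mul_of_nonneg_right hwidth hδ]

theorem IsExtendedContraction.dist_slide_le (hF : IsExtendedContraction V F p K) (hL : 0 < L)
    {c c' : ConeModel M L} (hc : c.height ∈ Icc 0 L) (hc' : c'.height ∈ Icc 0 L)
    (hV : c.height = L ∨ c.point ∈ V) (hV' : c'.height = L ∨ c'.point ∈ V) {m m' : ℝ}
    (hm : m ≤ c.height) (hm' : m' ≤ c'.height) :
    dist (slide L F (c, m)) (slide L F (c', m')) ≤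
      (8 + 10 * max 1 (K : ℝ)) * dist (c, m) (c', m') := by
  have hheight : |(slide L F (c, m)).height - (slide L F (c', m')).height| ≤
      2 * |c.height - c'.height| + 2 * |m - m'| := by
    simp only [slide]
    refine (abs_min_sub_min_le_max ..).trans ?_
    grind
  have hpoint := hF.width_mul_dist_slide_point_le hL hc hc' hV hV' m m'
  have hwidth := hF.slide_width_mul_dist_slide_point_le hL hc.2 hc'.2 m m'
  have hcone : |c.height - c'.height| + min (L - c.height) (L - c'.height) *
      min 2 (dist c.point c'.point) ≤ dist (c, m) (c', m') :=
    (ConeModel.dist_of_le hc.2 hc'.2).symm.trans_le (le_max_left ..)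
  have hamount : |m - m'| ≤ dist (c, m) (c', m') := le_max_right ..
  rw [ConeModel.dist_of_le (slide_height_mem_Icc hc hm).2 (slide_height_mem_Icc hc' hm').2]
  have hE : 0 ≤ min (L - c.height) (L - c'.height) * min 2 (dist c.point c'.point) := by
    have := hc.2; have := hc'.2
    exact mul_nonneg (by grind) (by positivity)
  nlinarith [show (1 : ℝ) ≤ max 1 (K : ℝ) from le_max_left .., abs_nonneg (c.height - c'.height)]

/-- The pairs of a point `c = (x, t)` of the cone and an amount `m` by which to slide it, where
`x` is in `V` unless `c` is at the vertex or `m = 0`. -/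
def slideDomain (V : Set M) (L : ℝ) : Set (ConeModel M L × ℝ) :=
  {q | q.1.height ∈ Icc 0 L ∧ q.2 ∈ Icc 0 q.1.height ∧
    (q.1.height = L ∨ q.1.point ∈ V ∨ q.2 = 0)}

theorem IsExtendedContraction.lipschitzOnWith_slide (hF : IsExtendedContraction V F p K)
    (hL : 0 < L) :
    LipschitzOnWith (9 + 10 * max 1 K) (slide L F) (slideDomain V L) := by
  -- A pair outside the reach of the previous lemma is fixed by `slide`, so it is compared with
  -- its partner by way of the partner's own trajectory.
  have fixed_left {c c' : ConeModel M L} {m' : ℝ} (hc : 0 ≤ c.height) (hc' : c'.height ∈ Icc 0 L)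
      (hm' : m' ∈ Icc 0 c'.height) (hV' : c'.height = L ∨ c'.point ∈ V) :
      dist (slide L F (c, 0)) (slide L F (c', m')) ≤
        (9 + 10 * max 1 (K : ℝ)) * dist (c, (0 : ℝ)) (c', m') := by
    have htrajectory := hF.dist_slide_le hL hc' hc' hV' hV' hc'.1 hm'.2
    rw [slide_zero hF.zero hc'.1] at htrajectory
    rw [slide_zero hF.zero hc]
    calc dist c (slide L F (c', m'))
        ≤ dist c c' + dist c' (slide L F (c', m')) := dist_triangle ..
      _ ≤ dist (c, (0 : ℝ)) (c', m') + (8 + 10 * max 1 (K : ℝ)) * dist (c', (0 : ℝ)) (c', m') := by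
          gcongr; exact le_max_left ..
      _ ≤ dist (c, (0 : ℝ)) (c', m') + (8 + 10 * max 1 (K : ℝ)) * dist (c, (0 : ℝ)) (c', m') := by
          gcongr; exact (dist_prod_same_left ..).trans_le (le_max_right ..)
      _ = _ := by ring
  refine LipschitzOnWith.of_dist_le_mul fun ⟨c, m⟩ ⟨hc, hm, hV⟩ ⟨c', m'⟩ ⟨hc', hm', hV'⟩ => ?_
  simp only [NNReal.coe_add, NNReal.coe_mul, NNReal.coe_max, NNReal.coe_ofNat, NNReal.coe_one]
  dsimp only at hc hc' hm hm' hV hV'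
  rw [← or_assoc] at hV hV'
  rcases hV with hV | rfl <;> rcases hV' with hV' | rfl
  · refine (hF.dist_slide_le hL hc hc' hV hV' hm.2 hm'.2).trans ?_
    gcongr
    norm_num
  · rw [dist_comm, dist_comm (c, m)]
    exact fixed_left hc'.1 hc hm hV
  · exact fixed_left hc.1 hc' hm' hV'
  · rw [slide_zero hF.zero hc.1, slide_zero hF.zero hc'.1]
    have hK : (1 : ℝ) ≤ max 1 (K : ℝ) := le_max_left ..
    calc dist c c' ≤ dist (c, (0 : ℝ)) (c', (0 : ℝ)) := le_max_left ..
      _ ≤ _ := le_mul_of_one_le_left dist_nonneg (by linarith)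

end Slide

/-! ### Pushing off a simplex onto its boundary -/

section Simplex

variable {ι : Type*} [Fintype ι]

/-- The vertices of the smallest face containing `θ`. -/
noncomputable def supp (θ : ι → ℝ) : Finset ι := {j | θ j ≠ 0}

theorem mem_supp {θ : ι → ℝ} {j : ι} : j ∈ supp θ ↔ θ j ≠ 0 := by simp [supp]

theorem supp_nonempty {θ : ι → ℝ} (hθ : θ ∈ stdSimplex ℝ ι) : (supp θ).Nonempty := by
  obtain ⟨j, -, hj⟩ := Finset.exists_ne_zero_of_sum_ne_zero (hθ.2.trans_ne one_ne_zero)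
  exact ⟨j, mem_supp.mpr hj⟩

theorem lipschitzWith_inf' {σ : Finset ι} (hσ : σ.Nonempty) :
    LipschitzWith 1 fun θ : ι → ℝ => σ.inf' hσ θ := by
  refine LipschitzWith.of_le_add fun θ θ' => ?_
  obtain ⟨j, hj, hmin⟩ := σ.exists_mem_eq_inf' hσ θ'
  rw [hmin, ← sub_le_iff_le_add']
  have : θ j - θ' j ≤ dist θ θ' := (le_abs_self _).trans (dist_le_pi_dist θ θ' j)
  linarith [Finset.inf'_le θ hj]

end Simplex

section PushOff

variable {ι : Type*} [DecidableEq ι]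

/-- The point whose barycentric coordinates are obtained from those of `θ` by subtracting `n` at
the vertices of `σ` and renormalizing. For `θ` in the simplex `σ`, it moves away from the
barycenter as `n` increases, and reaches the boundary when `n` is the least coordinate. -/
noncomputable def pushOff (σ : Finset ι) (q : (ι → ℝ) × ℝ) : ι → ℝ :=
  fun j => (q.1 j - if j ∈ σ then q.2 else 0) / (1 - σ.card * q.2)

variable {σ : Finset ι} {θ : ι → ℝ} {n : ℝ}

theorem pushOff_zero (σ : Finset ι) (θ : ι → ℝ) : pushOff σ (θ, 0) = θ := by
  ext j; simp [pushOff]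

theorem pushOff_apply_of_eq {j : ι} (hj : j ∈ σ) (hn : n = θ j) : pushOff σ (θ, n) j = 0 := by
  simp [pushOff, hj, hn]

theorem pushOff_apply_of_notMem {j : ι} (hj : j ∉ σ) (hθ : θ j = 0) :
    pushOff σ (θ, n) j = 0 := by
  simp [pushOff, hj, hθ]

variable [Fintype ι]

theorem supp_pushOff_subset (h : supp θ ⊆ σ) : supp (pushOff σ (θ, n)) ⊆ σ := fun _ hj =>
  by_contra fun hjσ => mem_supp.mp hj
    (pushOff_apply_of_notMem hjσ (not_not.mp fun hθ => hjσ (h (mem_supp.mpr hθ))))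

/-- The points `θ` of the standard simplex and the amounts `n` by which to push them off `σ`. -/
def pushOffDomain (σ : Finset ι) : Set ((ι → ℝ) × ℝ) :=
  {q | q.1 ∈ stdSimplex ℝ ι ∧ (∀ j ∈ σ, q.2 ≤ q.1 j) ∧ σ.card * q.2 ≤ 1 / 2}

theorem pushOff_mem_stdSimplex {q : (ι → ℝ) × ℝ} (hq : q ∈ pushOffDomain σ) :
    pushOff σ q ∈ stdSimplex ℝ ι := by
  obtain ⟨hθ, hle, hσ⟩ := hq
  have hscale : 0 < 1 - σ.card * q.2 := by linarith
  refine ⟨fun j => div_nonneg ?_ hscale.le, ?_⟩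
  · split_ifs with hj
    exacts [sub_nonneg.mpr (hle j hj), by simpa using hθ.1 j]
  · simp only [pushOff]
    rw [← Finset.sum_div, Finset.sum_sub_distrib, hθ.2, Finset.sum_ite_mem, Finset.univ_inter,
      Finset.sum_const, nsmul_eq_mul, div_self hscale.ne']

theorem abs_div_sub_div_le {u u' v v' : ℝ} (hv : 1 / 2 ≤ v) (hv' : v' ≠ 0) (hu' : |u' / v'| ≤ 1) :
    |u / v - u' / v'| ≤ 2 * (|u - u'| + |v - v'|) := by
  have hv0 : 0 < v := by linarith
  have split : u / v - u' / v' = ((u - u') + u' / v' * (v' - v)) / v := by field_simp; ring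
  rw [split, abs_div, abs_of_pos hv0, div_le_iff₀ hv0]
  have hslope : |u' / v'| * |v - v'| ≤ |v - v'| := mul_le_of_le_one_left (abs_nonneg _) hu'
  calc |u - u' + u' / v' * (v' - v)| ≤ |u - u'| + |u' / v'| * |v - v'| := by
        rw [abs_sub_comm v, ← abs_mul]; exact abs_add_le ..
    _ ≤ 2 * (|u - u'| + |v - v'|) * (1 / 2) := by linarith
    _ ≤ 2 * (|u - u'| + |v - v'|) * v := by gcongr

theorem lipschitzOnWith_pushOff (σ : Finset ι) :
    LipschitzOnWith (4 + 2 * σ.card) (pushOff σ) (pushOffDomain σ) := by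
  refine LipschitzOnWith.of_dist_le_mul fun ⟨θ, n⟩ hq ⟨θ', n'⟩ hq' =>
    (dist_pi_le_iff (by positivity)).mpr fun j => ?_
  have hθ : |θ j - θ' j| ≤ dist (θ, n) (θ', n') := (dist_le_pi_dist θ θ' j).trans (le_max_left ..)
  have hn : |n - n'| ≤ dist (θ, n) (θ', n') := le_max_right ..
  have hnum : |(θ j - if j ∈ σ then n else 0) - (θ' j - if j ∈ σ then n' else 0)| ≤
      2 * dist (θ, n) (θ', n') := by
    split_ifs <;> grind
  have hden : |(1 - σ.card * n) - (1 - σ.card * n')| ≤ σ.card * dist (θ, n) (θ', n') := by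
    rw [sub_sub_sub_cancel_left, ← mul_sub, abs_mul, Nat.abs_cast, abs_sub_comm]
    gcongr
  have hcoord : |pushOff σ (θ', n') j| ≤ 1 := by
    have := mem_Icc_of_mem_stdSimplex (pushOff_mem_stdSimplex hq') j
    exact abs_le.mpr ⟨by linarith [this.1], this.2⟩
  have hscale := hq.2.2
  have hscale' := hq'.2.2
  refine (abs_div_sub_div_le (by linarith) (by linarith) hcoord).trans ?_
  push_cast
  linarith

end PushOff

/-! ### Removing one simplex from the cylinder -/

section PushStage

variable {M : Type*} {N : ℕ} {L : ℝ}

/-- The distance, up to a factor in the vertical direction, from a point of `σ × K(U_σ)` to the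
union of the boundary of `σ` and the base of the cone. With the factor, pushing `z` by the amount
`depth hσ z` keeps the denominator in `pushOff` at least `1 / 2`. -/
noncomputable def depth {σ : Finset (Fin N)} (hσ : σ.Nonempty) (z : CylModel N M L) : ℝ :=
  min (σ.inf' hσ z.1) (z.2.height / (2 * σ.card * L))

/-- The amount by which the point `q.1` is pushed at time `q.2`. -/
noncomputable def pushAmount {σ : Finset (Fin N)} (hσ : σ.Nonempty)
    (q : CylModel N M L × unitInterval) : ℝ :=
  min q.2 (depth hσ q.1)

/-- The homotopy pushing the part of the cylinder over the interior of the simplex `σ` to the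
boundary of `σ` or to the base of the cone, whichever is reached first. -/
noncomputable def pushStage {σ : Finset (Fin N)} (hσ : σ.Nonempty) (F : M × unitInterval → M)
    (q : CylModel N M L × unitInterval) : CylModel N M L :=
  (pushOff σ (q.1.1, pushAmount hσ q), slide L F (q.1.2, 2 * σ.card * L * pushAmount hσ q))

variable {σ : Finset (Fin N)} {hσ : σ.Nonempty} {z : CylModel N M L} {s : unitInterval}

theorem depth_nonneg (hθ : z.1 ∈ stdSimplex ℝ (Fin N)) (ht : z.2.height ∈ Icc 0 L) :
    0 ≤ depth hσ z := by
  have hL := ht.1.trans ht.2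
  have := ht.1
  exact le_min ((Finset.le_inf'_iff hσ _).mpr fun j _ => hθ.1 j) (by positivity)

theorem depth_le_apply {j : Fin N} (hj : j ∈ σ) : depth hσ z ≤ z.1 j :=
  (min_le_left ..).trans (Finset.inf'_le _ hj)

theorem subset_supp_of_depth_pos (hd : 0 < depth hσ z) : σ ⊆ supp z.1 := fun _ hj =>
  mem_supp.mpr (hd.trans_le (depth_le_apply hj)).ne'

theorem two_mul_card_mul_pos (hσ : σ.Nonempty) (hL : 0 < L) : 0 < 2 * σ.card * L := by
  have := hσ.card_pos
  positivity

theorem mul_depth_le_height (hL : 0 < L) : 2 * σ.card * L * depth hσ z ≤ z.2.height :=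
  (le_div_iff₀' (two_mul_card_mul_pos hσ hL)).mp (min_le_right ..)

theorem height_pos_of_depth_pos (hL : 0 < L) (hd : 0 < depth hσ z) : 0 < z.2.height :=
  (mul_pos (two_mul_card_mul_pos hσ hL) hd).trans_le (mul_depth_le_height hL)

theorem depth_eq_apply_or_mul_depth_eq_height (hL : 0 < L) :
    (∃ j ∈ σ, depth hσ z = z.1 j) ∨ 2 * σ.card * L * depth hσ z = z.2.height := by
  rcases min_choice (σ.inf' hσ z.1) (z.2.height / (2 * σ.card * L)) with h | h
  · obtain ⟨j, hj, hmin⟩ := σ.exists_mem_eq_inf' hσ z.1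
    exact Or.inl ⟨j, hj, h.trans hmin⟩
  · exact Or.inr (by rw [depth, h, mul_div_cancel₀ _ (two_mul_card_mul_pos hσ hL).ne'])

theorem pushAmount_one (hθ : z.1 ∈ stdSimplex ℝ (Fin N)) : pushAmount hσ (z, 1) = depth hσ z :=
  let ⟨_, hj⟩ := hσ
  min_eq_right ((depth_le_apply hj).trans (mem_Icc_of_mem_stdSimplex hθ _).2)

theorem pushAmount_mem_Icc (hθ : z.1 ∈ stdSimplex ℝ (Fin N)) (ht : z.2.height ∈ Icc 0 L) :
    pushAmount hσ (z, s) ∈ Icc 0 (depth hσ z) :=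
  ⟨le_min s.2.1 (depth_nonneg hθ ht), min_le_right ..⟩

theorem mul_pushAmount_mem_Icc (hL : 0 < L) (hθ : z.1 ∈ stdSimplex ℝ (Fin N))
    (ht : z.2.height ∈ Icc 0 L) :
    2 * σ.card * L * pushAmount hσ (z, s) ∈ Icc 0 z.2.height :=
  have h := pushAmount_mem_Icc hθ ht
  ⟨mul_nonneg (two_mul_card_mul_pos hσ hL).le h.1,
    (mul_le_mul_of_nonneg_left h.2 (two_mul_card_mul_pos hσ hL).le).trans (mul_depth_le_height hL)⟩

theorem prodMk_pushAmount_mem_pushOffDomain (hL : 0 < L) (hθ : z.1 ∈ stdSimplex ℝ (Fin N))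
    (ht : z.2.height ∈ Icc 0 L) : (z.1, pushAmount hσ (z, s)) ∈ pushOffDomain σ := by
  refine ⟨hθ, fun j hj => (pushAmount_mem_Icc hθ ht).2.trans (depth_le_apply hj), ?_⟩
  have := (mul_pushAmount_mem_Icc (hσ := hσ) (s := s) hL hθ ht).2.trans ht.2
  refine le_of_mul_le_mul_left ?_ hL
  linarith

theorem pushStage_eq_self {F : M × unitInterval → M} (hF0 : ∀ x, F (x, 0) = x)
    (ht : 0 ≤ z.2.height) (h : pushAmount hσ (z, s) = 0) : pushStage hσ F (z, s) = z := by
  simp only [pushStage, h, mul_zero]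
  rw [pushOff_zero, slide_zero hF0 ht]

theorem exists_lipschitzWith_pushAmount [PseudoMetricSpace M] (hσ : σ.Nonempty) :
    ∃ C, LipschitzWith C (pushAmount hσ : CylModel N M L × unitInterval → ℝ) := by
  have hvertical : LipschitzWith (2 * σ.card * L)⁻¹.nnabs
      fun z : CylModel N M L => z.2.height / (2 * σ.card * L) := by
    refine LipschitzWith.of_dist_le_mul fun z w => ?_
    have hheight : |z.2.height - w.2.height| ≤ dist z w :=
      (le_add_of_nonneg_right (by positivity)).trans (le_max_right ..)
    rw [Real.dist_eq, ← sub_div, abs_div, div_eq_inv_mul, ← abs_inv, Real.coe_nnabs]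
    gcongr
  have hdepth := ((lipschitzWith_inf' hσ).comp LipschitzWith.prod_fst).min hvertical
  have htime : LipschitzWith 1 fun q : CylModel N M L × unitInterval => (q.2 : ℝ) :=
    LipschitzWith.subtype_val _ |>.comp LipschitzWith.prod_snd |>.weaken (by simp)
  exact ⟨_, htime.min (hdepth.comp LipschitzWith.prod_fst)⟩

end PushStage

section Stage

variable {M : Type*} [MetricSpace M] {N : ℕ} {U : Fin N → Set M} {L : ℝ}

/-- The mapping cylinder `M(p)`, as a subset of its model. -/
def cylinder (U : Fin N → Set M) (L : ℝ) : Set (CylModel N M L) :=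
  {z | InCyl U L (z.1, z.2.toProd)}

theorem mem_cylinder_iff {z : CylModel N M L} :
    z ∈ cylinder U L ↔ z.1 ∈ stdSimplex ℝ (Fin N) ∧ (⋂ j ∈ supp z.1, U j).Nonempty ∧
      z.2.height ∈ Icc 0 L ∧ (z.2.height = L ∨ z.2.point ∈ ⋂ j ∈ supp z.1, U j) := by
  simp only [mem_supp]
  constructor
  · rintro ⟨⟨hθ, hsum, hne⟩, ht, s, hs, -, hx⟩
    exact ⟨⟨fun j => (hθ j).1, hsum⟩, hne, ht,
      hx.imp_right fun hx => biInter_subset_biInter_left hs hx⟩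
  · rintro ⟨hθ, hne, ht, hx⟩
    refine ⟨⟨mem_Icc_of_mem_stdSimplex hθ, hθ.2, hne⟩, ht, supp z.1, fun j => mem_supp.mpr, ?_⟩
    simp only [mem_supp]
    exact ⟨hne, hx⟩

theorem inDZero_iff (hL : 0 < L) {z : CylModel N M L} :
    InDZero U (z.1, z.2.toProd) ↔ z ∈ cylinder U L ∧ z.2.height = 0 := by
  rw [mem_cylinder_iff]
  simp only [mem_supp]
  constructor
  · rintro ⟨⟨hθ, hsum, hne⟩, ht, hx⟩
    change z.2.height = 0 at ht
    exact ⟨⟨⟨fun j => (hθ j).1, hsum⟩, hne, by simp [ht, hL.le], Or.inr hx⟩, ht⟩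
  · rintro ⟨⟨hθ, hne, -, hx⟩, ht⟩
    exact ⟨⟨mem_Icc_of_mem_stdSimplex hθ, hθ.2, hne⟩, ht, hx.resolve_left (ht ▸ hL.ne)⟩

/-- The points of the cylinder lying at height `0` or in the relative interior of a simplex of the
family `S`. -/
def stage (U : Fin N → Set M) (L : ℝ) (S : Finset (Finset (Fin N))) : Set (CylModel N M L) :=
  {z ∈ cylinder U L | z.2.height = 0 ∨ supp z.1 ∈ S}

variable {S : Finset (Finset (Fin N))} {σ : Finset (Fin N)} {hσ : σ.Nonempty}
  {F : M × unitInterval → M} {p : M} {K : NNReal} {z : CylModel N M L} {s : unitInterval}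

theorem supp_eq_of_depth_pos (hL : 0 < L) (hS : ∀ τ ∈ S, ¬ σ ⊆ τ)
    (hz : z ∈ stage U L (insert σ S)) (hd : 0 < depth hσ z) : supp z.1 = σ :=
  (Finset.mem_insert.mp (hz.2.resolve_left (height_pos_of_depth_pos hL hd).ne')).resolve_right
    fun h => hS _ h (subset_supp_of_depth_pos hd)

theorem depth_pos (hL : 0 < L) (hz : z ∈ cylinder U L) (ht : z.2.height ≠ 0)
    (hσz : supp z.1 = σ) : 0 < depth hσ z := by
  obtain ⟨hθ, -, ht0, -⟩ := mem_cylinder_iff.mp hz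
  refine lt_min ((Finset.lt_inf'_iff hσ).mpr fun j hj => ?_) ?_
  · exact (hθ.1 j).lt_of_ne' (mem_supp.mp (hσz ▸ hj))
  · exact div_pos (ht0.1.lt_of_ne' ht) (two_mul_card_mul_pos hσ hL)

theorem prodMk_mul_pushAmount_mem_slideDomain (hL : 0 < L) (hS : ∀ τ ∈ S, ¬ σ ⊆ τ)
    (hz : z ∈ stage U L (insert σ S)) :
    (z.2, 2 * σ.card * L * pushAmount hσ (z, s)) ∈ slideDomain (⋂ j ∈ σ, U j) L := by
  obtain ⟨hθ, -, ht, hx⟩ := mem_cylinder_iff.mp hz.1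
  refine ⟨ht, mul_pushAmount_mem_Icc hL hθ ht, ?_⟩
  rcases (pushAmount_mem_Icc (hσ := hσ) (s := s) hθ ht).1.eq_or_lt with h | h
  · exact Or.inr (Or.inr (by rw [← h, mul_zero]))
  · rw [supp_eq_of_depth_pos hL hS hz (h.trans_le (min_le_right ..))] at hx
    exact hx.imp_right Or.inl

theorem exists_lipschitzOnWith_pushStage (hσ : σ.Nonempty) (hL : 0 < L) (hS : ∀ τ ∈ S, ¬ σ ⊆ τ)
    (hF : IsExtendedContraction (⋂ j ∈ σ, U j) F p K) :
    ∃ C, LipschitzOnWith C (pushStage hσ F) (stage U L (insert σ S) ×ˢ univ) := by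
  obtain ⟨C, hC⟩ := exists_lipschitzWith_pushAmount (M := M) (L := L) hσ
  have hsimplex := (lipschitzOnWith_pushOff σ).comp
    ((LipschitzWith.prod_fst.comp LipschitzWith.prod_fst).prodMk hC).lipschitzOnWith
    fun q (hq : q ∈ stage U L (insert σ S) ×ˢ univ) =>
      let ⟨hθ, _, ht, _⟩ := mem_cylinder_iff.mp hq.1.1
      prodMk_pushAmount_mem_pushOffDomain hL hθ ht
  have hcone := (hF.lipschitzOnWith_slide hL).comp
    ((LipschitzWith.prod_snd.comp LipschitzWith.prod_fst).prodMk
      ((lipschitzWith_smul (2 * σ.card * L)).comp hC)).lipschitzOnWith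
    fun q (hq : q ∈ stage U L (insert σ S) ×ˢ univ) =>
      prodMk_mul_pushAmount_mem_slideDomain hL hS hq.1
  exact ⟨_, hsimplex.prodMk hcone⟩

theorem pushStage_mem_cylinder (hL : 0 < L) (hF : IsExtendedContraction (⋂ j ∈ σ, U j) F p K)
    (hz : z ∈ cylinder U L) (hσz : supp z.1 = σ) (hn : 0 < pushAmount hσ (z, s)) :
    pushStage hσ F (z, s) ∈ cylinder U L := by
  obtain ⟨hθ, hne, ht, -⟩ := mem_cylinder_iff.mp hz
  have hU : ⋂ j ∈ σ, U j ⊆ ⋂ j ∈ supp (pushStage hσ F (z, s)).1, U j :=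
    biInter_subset_biInter_left (supp_pushOff_subset hσz.subset)
  exact mem_cylinder_iff.mpr
    ⟨pushOff_mem_stdSimplex (prodMk_pushAmount_mem_pushOffDomain hL hθ ht), (hσz ▸ hne).mono hU,
      slide_height_mem_Icc ht (mul_pushAmount_mem_Icc hL hθ ht).2,
      Or.inr (hU (hF.slide_point_mem hL (mul_pos (two_mul_card_mul_pos hσ hL) hn) z.2))⟩

theorem pushStage_eq_self_of_mem_stage (hL : 0 < L) (hF0 : ∀ x, F (x, 0) = x)
    (hS : ∀ τ ∈ S, ¬ σ ⊆ τ) (hz : z ∈ stage U L S) : pushStage hσ F (z, s) = z := by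
  obtain ⟨hθ, -, ht, -⟩ := mem_cylinder_iff.mp hz.1
  have hn := pushAmount_mem_Icc (hσ := hσ) (s := s) hθ ht
  refine pushStage_eq_self hF0 ht.1 (hn.1.eq_of_not_lt' fun hpos => ?_)
  have hd := hpos.trans_le hn.2
  exact hS _ (hz.2.resolve_left (height_pos_of_depth_pos hL hd).ne') (subset_supp_of_depth_pos hd)

theorem pushStage_mem_stage_insert (hL : 0 < L) (hface : ∀ τ ⊂ σ, τ ∈ S)
    (hS : ∀ τ ∈ S, ¬ σ ⊆ τ) (hF : IsExtendedContraction (⋂ j ∈ σ, U j) F p K)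
    (hz : z ∈ stage U L (insert σ S)) :
    pushStage hσ F (z, s) ∈ stage U L (insert σ S) := by
  obtain ⟨hθ, -, ht, -⟩ := mem_cylinder_iff.mp hz.1
  have hn := pushAmount_mem_Icc (hσ := hσ) (s := s) hθ ht
  rcases hn.1.eq_or_lt with h | hpos
  · rwa [pushStage_eq_self hF.zero ht.1 h.symm]
  · have hσz := supp_eq_of_depth_pos hL hS hz (hpos.trans_le hn.2)
    refine ⟨pushStage_mem_cylinder hL hF hz.1 hσz hpos, Or.inr (Finset.mem_insert.mpr ?_)⟩
    exact (supp_pushOff_subset hσz.subset).eq_or_ssubset.imp_right (hface _)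

theorem pushStage_one_mem_stage (hL : 0 < L) (hface : ∀ τ ⊂ σ, τ ∈ S)
    (hS : ∀ τ ∈ S, ¬ σ ⊆ τ) (hF : IsExtendedContraction (⋂ j ∈ σ, U j) F p K)
    (hz : z ∈ stage U L (insert σ S)) :
    pushStage hσ F (z, 1) ∈ stage U L S := by
  obtain ⟨hθ, -, ht, -⟩ := mem_cylinder_iff.mp hz.1
  have hone := pushAmount_one (hσ := hσ) hθ
  rcases (depth_nonneg (hσ := hσ) hθ ht).eq_or_lt with h | hpos
  · rw [pushStage_eq_self hF.zero ht.1 (hone.trans h.symm)]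
    refine ⟨hz.1, or_iff_not_imp_left.mpr fun ht0 => ?_⟩
    refine Finset.mem_of_mem_insert_of_ne (hz.2.resolve_left ht0) fun hσz => ?_
    exact (depth_pos hL hz.1 ht0 hσz).ne h
  · have hσz := supp_eq_of_depth_pos hL hS hz hpos
    refine ⟨pushStage_mem_cylinder hL hF hz.1 hσz (hone ▸ hpos), ?_⟩
    rcases depth_eq_apply_or_mul_depth_eq_height (z := z) (hσ := hσ) hL with ⟨j, hj, hmin⟩ | hmin
    · have : j ∉ supp (pushStage hσ F (z, 1)).1 := fun hj' =>
        mem_supp.mp hj' (pushOff_apply_of_eq hj (hone.trans hmin))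
      exact Or.inr (hface _ ((supp_pushOff_subset hσz.subset).ssubset_of_mem_notMem hj this))
    · left
      simp only [pushStage, hone, hmin]
      exact slide_height_self ht.1

theorem isLipSDR_stage_insert (hL : 0 < L) (hface : ∀ τ ⊂ σ, τ ∈ S) (hS : ∀ τ ∈ S, ¬ σ ⊆ τ)
    (hU : ∀ s : Finset (Fin N), s.Nonempty → (⋂ j ∈ s, U j).Nonempty →
      IsLipContractible (⋂ j ∈ s, U j)) :
    IsLipSDR (stage U L (insert σ S)) (stage U L S) := by
  have subset : stage U L S ⊆ stage U L (insert σ S) := fun z hz =>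
    ⟨hz.1, hz.2.imp_right Finset.mem_insert_of_mem⟩
  by_cases hσz : ∃ z ∈ cylinder U L, supp z.1 = σ
  · obtain ⟨z, hz, rfl⟩ := hσz
    obtain ⟨hθ, hne, -, -⟩ := mem_cylinder_iff.mp hz
    have hσ := supp_nonempty hθ
    obtain ⟨F, p, K, hF⟩ := (hU _ hσ hne).exists_isExtendedContraction
    obtain ⟨C, hC⟩ := exists_lipschitzOnWith_pushStage hσ hL hS hF
    refine ⟨subset, pushStage hσ F, C, hC, fun q hq => ?_, fun z hz => ?_, fun z hz => ?_,
      fun z hz s => ?_⟩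
    · exact pushStage_mem_stage_insert hL hface hS hF hq.1
    · obtain ⟨hθ, -, ht, -⟩ := mem_cylinder_iff.mp hz.1
      exact pushStage_eq_self hF.zero ht.1 (min_eq_left (depth_nonneg hθ ht))
    · exact pushStage_one_mem_stage hL hface hS hF hz
    · exact pushStage_eq_self_of_mem_stage hL hF.zero hS hz
  · have : stage U L (insert σ S) = stage U L S := by
      refine subset.antisymm' fun z hz => ⟨hz.1, hz.2.imp_right fun h => ?_⟩
      exact Finset.mem_of_mem_insert_of_ne h fun h => hσz ⟨z, hz.1, h⟩
    exact this ▸ IsLipSDR.refl _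

theorem isLipSDR_stage_empty (hL : 0 < L) (hlower : IsLowerSet (S : Set (Finset (Fin N))))
    (hU : ∀ s : Finset (Fin N), s.Nonempty → (⋂ j ∈ s, U j).Nonempty →
      IsLipContractible (⋂ j ∈ s, U j)) :
    IsLipSDR (stage U L S) (stage U L ∅) := by
  revert hlower
  refine Finset.induction_on_max_value Finset.card S (fun _ => IsLipSDR.refl _)
    fun σ S hσS hmax ih hlower => ?_
  have hS : ∀ τ ∈ S, ¬ σ ⊆ τ := fun τ hτ hle =>
    hσS (Finset.eq_of_subset_of_card_le hle (hmax τ hτ) ▸ hτ)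
  have hface : ∀ τ ⊂ σ, τ ∈ S := fun τ hτ => Finset.mem_of_mem_insert_of_ne
    (hlower hτ.subset (Finset.mem_coe.mpr (Finset.mem_insert_self σ S))) hτ.ne
  refine (isLipSDR_stage_insert hL hface hS hU).trans (ih fun τ ρ hρτ hτ => ?_)
  refine Finset.mem_of_mem_insert_of_ne
    (hlower hρτ (Finset.mem_coe.mpr (Finset.mem_insert_of_mem hτ))) ?_
  rintro rfl
  exact hS τ hτ hρτ

theorem isLipSDR_cylinder (hL : 0 < L)
    (hU : ∀ s : Finset (Fin N), s.Nonempty → (⋂ j ∈ s, U j).Nonempty →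
      IsLipContractible (⋂ j ∈ s, U j)) :
    IsLipSDR (cylinder U L) {z ∈ cylinder U L | z.2.height = 0} := by
  have top : stage U L Finset.univ = cylinder U L := by ext z; simp [stage]
  have bottom : stage U L ∅ = {z ∈ cylinder U L | z.2.height = 0} := by ext z; simp [stage]
  rw [← bottom, ← top]
  exact isLipSDR_stage_empty hL (by simp [isLowerSet_univ]) hU

end Stage

theorem cylinder_lipSDR_onto_DZero_general {M : Type*} [MetricSpace M]
    {N : ℕ} (U : Fin N → Set M)
    (hU : ∀ s : Finset (Fin N), s.Nonempty → (⋂ j ∈ s, U j).Nonempty →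
      IsLipContractible (⋂ j ∈ s, U j))
    (L : ℝ) (hL : 0 < L) :
    ∃ (Φ : ((Fin N → ℝ) × M × ℝ) × unitInterval → (Fin N → ℝ) × M × ℝ) (K : NNReal),
      (∀ z, InCyl U L z → ∀ t : unitInterval, InCyl U L (Φ (z, t))) ∧
      (∀ z w, InCyl U L z → InCyl U L w → ∀ s t : unitInterval,
        cylDist L (Φ (z, s)) (Φ (w, t)) ≤ K * max (cylDist L z w) (dist s t)) ∧
      (∀ z, InCyl U L z → cylDist L (Φ (z, 0)) z = 0) ∧
      (∀ z, InCyl U L z → InDZero U (Φ (z, 1))) ∧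
      (∀ z, InCyl U L z → InDZero U z →
        ∀ t : unitInterval, cylDist L (Φ (z, t)) z = 0) := by
  obtain ⟨-, H, K, hH, hmem, hzero, hone, hfix⟩ := isLipSDR_cylinder hL hU
  let model (z : (Fin N → ℝ) × M × ℝ) : CylModel N M L := (z.1, ⟨z.2.1, z.2.2⟩)
  have height_le {z : CylModel N M L} (hz : z ∈ cylinder U L) : z.2.height ≤ L := hz.2.1.2
  have mem {z} (hz : InCyl U L z) (t : unitInterval) : H (model z, t) ∈ cylinder U L :=
    hmem ⟨hz, mem_univ t⟩
  refine ⟨fun q => let z := H (model q.1, q.2); (z.1, z.2.toProd), 9 * K, fun z hz t => mem hz t,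
    fun z w hz hw s t => ?_, fun z hz => ?_, fun z hz => ?_, fun z hz hz0 t => ?_⟩
  · calc _ ≤ 3 * dist (H (model z, s)) (H (model w, t)) :=
          cylDist_le_three_mul_dist (height_le (mem hz s)) (height_le (mem hw t))
      _ ≤ 3 * (K * max (dist (model z) (model w)) (dist s t)) := by
          gcongr; exact hH.dist_le_mul (model z, s) ⟨hz, trivial⟩ (model w, t) ⟨hw, trivial⟩
      _ ≤ 3 * (K * (3 * max (cylDist L z w) (dist s t))) := by
          gcongr
          have hd := dist_le_three_mul_cylDist (z := model z) (w := model w) hz.2.1.2 hw.2.1.2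
          rw [mul_max_of_nonneg _ _ zero_le_three]
          exact max_le_max hd (by linarith [dist_nonneg (x := s) (y := t)])
      _ = _ := by push_cast; ring
  · dsimp only
    rw [hzero _ hz]
    exact cylDist_self (model z) hz.2.1.2
  · exact (inDZero_iff hL).mpr (hone _ hz)
  · dsimp only
    rw [hfix _ ((inDZero_iff hL).mp hz0)]
    exact cylDist_self (model z) hz.2.1.2

/-- For a compact metric space with a finite good covering and `L > 6`,
there is a Lipschitz strong deformation retraction `Φ` of the mapping cylinder `M(p)` onto
`D(𝒰) × {0}`.  Everything is expressed on representatives, with equality in `M(p)`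
expressed as vanishing of `cylDist`. -/
theorem cylinder_lipSDR_onto_DZero {M : Type*} [MetricSpace M] [CompactSpace M]
    {N : ℕ} (U : Fin N → Set M) (hU : IsGoodCovering U) (L : ℝ) (hL : 6 < L) :
    ∃ (Φ : ((Fin N → ℝ) × M × ℝ) × unitInterval → (Fin N → ℝ) × M × ℝ) (K : NNReal),
      (∀ z, InCyl U L z → ∀ t : unitInterval, InCyl U L (Φ (z, t))) ∧
      (∀ z w, InCyl U L z → InCyl U L w → ∀ s t : unitInterval,
        cylDist L (Φ (z, s)) (Φ (w, t)) ≤ K * max (cylDist L z w) (dist s t)) ∧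
      (∀ z, InCyl U L z → cylDist L (Φ (z, 0)) z = 0) ∧
      (∀ z, InCyl U L z → InDZero U (Φ (z, 1))) ∧
      (∀ z, InCyl U L z → InDZero U z →
        ∀ t : unitInterval, cylDist L (Φ (z, t)) z = 0) :=
  cylinder_lipSDR_onto_DZero_general U
    (fun s hs hne => (hU.2.2.2.2 s hs hne).isLipContractible) L (by linarith)
end

section
/- Let M be a compact metric space with a finite good covering 𝒰 = {U_1,…,U_N}, and fix L > 6. Then for each k ≥ 1 there exists a Lipschitz strong deformation retraction Φ^k : M(p^k) × [0,1] → M(p^k) of M(p^k) onto (D^k × {0}) ∪ M(p^{k−1}). -/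
open Metric Set

/-- `(θ, x, t)` represents a point of `M(p^k) = ⋃_{σ ∈ 𝒩^(k)} σ × K(U_σ)`, the part of the
mapping cylinder over the `k`-skeleton of the nerve: as `InCyl`, but the simplex `s` has at
most `k+1` vertices. -/
def InCylK {M : Type*} [MetricSpace M] {N : ℕ} (U : Fin N → Set M) (L : ℝ) (k : ℕ)
    (z : (Fin N → ℝ) × M × ℝ) : Prop :=
  z.1 ∈ NerveSet U ∧ z.2.2 ∈ Icc 0 L ∧
    ∃ s : Finset (Fin N), s.card ≤ k + 1 ∧ (∀ j, z.1 j ≠ 0 → j ∈ s) ∧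
      (⋂ j ∈ s, U j).Nonempty ∧ (z.2.2 = L ∨ z.2.1 ∈ ⋂ j ∈ s, U j)

/-- `(θ, x, t)` represents a point of `D^k × {0}`: `θ` lies in the `k`-skeleton of the
nerve (its support has at most `k+1` elements), `t = 0`, and
`x ∈ ⋂_{j ∈ supp θ} U_j`. -/
def InDZeroK {M : Type*} [MetricSpace M] {N : ℕ} (U : Fin N → Set M) (k : ℕ)
    (z : (Fin N → ℝ) × M × ℝ) : Prop :=
  z.1 ∈ NerveSet U ∧ {j | z.1 j ≠ 0}.ncard ≤ k + 1 ∧ z.2.2 = 0 ∧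
    z.2.1 ∈ ⋂ j ∈ {j | z.1 j ≠ 0}, U j

/-!
The retraction acts on each product `σ × K(V)` of a simplex `σ` with `k + 1` vertices and the cone
over `V = U_σ`, and it has to push `(θ, [x, t])` to the boundary of `σ` or to the base of the cone.
Dilating `σ` from its barycenter and descending in the cone does this; which of the two arrives
first is decided by comparing the depth of `θ` in `σ` with `t / (4 * L)`. Descending tears the cone
apart at its vertex, so near the vertex `x` is first contracted to a point `p` of `V`, after which
only the ray over `p` moves. Contraction, dilation and descent are all bounded by a multiple of the
depth of `θ`, hence of every barycentric coordinate of `θ`. The retractions of the cells therefore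
glue with the identity on the lower skeleton to a Lipschitz map: a point in the open face spanned by
`σ` moves by at most a multiple of its distance to the other closed faces.

All estimates are made for a trigonometry-free pseudometric on representatives, which is
bi-Lipschitz equivalent to `cylDist`.
-/

open scoped NNReal

/-! ### A trigonometry-free cone metric -/

section TruncDist

variable {M : Type*} [PseudoMetricSpace M]

/-- The distance truncated at `2`, the diameter of the unit circle. It is equivalent to the chord
of angle `min π (dist x y)` that enters the cone distance. -/
noncomputable def truncDist (x y : M) : ℝ := min 2 (dist x y)

lemma truncDist_nonneg (x y : M) : 0 ≤ truncDist x y := le_min zero_le_two dist_nonneg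

lemma truncDist_le_two (x y : M) : truncDist x y ≤ 2 := min_le_left _ _

@[simp] lemma truncDist_self (x : M) : truncDist x x = 0 := by simp [truncDist]

lemma truncDist_comm (x y : M) : truncDist x y = truncDist y x := by
  simp only [truncDist, dist_comm]

lemma truncDist_triangle (x y z : M) : truncDist x z ≤ truncDist x y + truncDist y z := by
  have := dist_triangle x y z
  have := dist_nonneg (x := x) (y := y)
  have := dist_nonneg (x := y) (y := z)
  grind [truncDist]

end TruncDist

/-- Representatives `(x, t)` of points of the cone of height `L` over `M`: the base is at height
`0` and every representative of height `L` is one of the vertex. This copy of `M × ℝ`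
carries a pseudometric which is bi-Lipschitz equivalent to `coneDist L` at heights at most `L`
but avoids trigonometry. -/
structure ConeRep (M : Type*) (L : ℝ) where
  point : M
  height : ℝ

namespace ConeRep

variable {M : Type*} {L : ℝ}

/-- The distance to the vertex of the cone, read as `0` above the vertex. -/
noncomputable def radius (c : ConeRep M L) : ℝ := max 0 (L - c.height)

lemma radius_nonneg (c : ConeRep M L) : 0 ≤ c.radius := le_max_left _ _

lemma radius_of_le {c : ConeRep M L} (hc : c.height ≤ L) : c.radius = L - c.height :=
  max_eq_right (sub_nonneg.2 hc)

lemma radius_le_of_nonneg {c : ConeRep M L} (hL : 0 ≤ L) (hc : 0 ≤ c.height) : c.radius ≤ L :=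
  max_le hL (sub_le_self L hc)

lemma radius_le_add (c c' : ConeRep M L) : c.radius ≤ c'.radius + max 0 (c'.height - c.height) :=
  max_le (add_nonneg c'.radius_nonneg (le_max_left _ _)) <| by
    have := le_max_right 0 (L - c'.height)
    have := le_max_right 0 (c'.height - c.height)
    simp only [radius]
    linarith

variable [PseudoMetricSpace M]

lemma heights_add_truncDist_triangle (x y z : ConeRep M L) :
    |x.height - z.height| + min x.radius z.radius * truncDist x.point z.point ≤
      |x.height - y.height| + min x.radius y.radius * truncDist x.point y.point +
        (|y.height - z.height| + min y.radius z.radius * truncDist y.point z.point) := by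
  have hδ := truncDist_triangle x.point y.point z.point
  have hδ₂ := truncDist_le_two x.point z.point
  rcases le_total (min x.radius z.radius) y.radius with hm | hm
  · have hx : min x.radius z.radius ≤ min x.radius y.radius := le_min (min_le_left _ _) hm
    have hz : min x.radius z.radius ≤ min y.radius z.radius := le_min hm (min_le_right _ _)
    have hm₀ : 0 ≤ min x.radius z.radius := le_min x.radius_nonneg z.radius_nonneg
    linarith [abs_sub_le x.height y.height z.height, mul_le_mul_of_nonneg_left hδ hm₀,
      mul_le_mul_of_nonneg_right hx (truncDist_nonneg x.point y.point),
      mul_le_mul_of_nonneg_right hz (truncDist_nonneg y.point z.point)]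
  · -- Here `y` is nearest to the vertex, and the detour of the heights through `y.height` pays for
    -- the larger factor in front of `truncDist x.point z.point ≤ 2`.
    have hx := x.radius_le_add y
    have hz := z.radius_le_add y
    obtain ⟨hyx, hyz⟩ := le_min_iff.1 hm
    have heights : |x.height - z.height| + 2 * (min x.radius z.radius - y.radius) ≤
        |x.height - y.height| + |y.height - z.height| := by
      grind
    rw [min_eq_right hyx, min_eq_left hyz]
    nlinarith [y.radius_nonneg]

noncomputable instance : PseudoMetricSpace (ConeRep M L) where
  dist c c' := |c.height - c'.height| + min c.radius c'.radius * truncDist c.point c'.point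
  dist_self c := by simp
  dist_comm c c' := by rw [abs_sub_comm, min_comm, truncDist_comm]
  dist_triangle := heights_add_truncDist_triangle

lemma dist_def (c c' : ConeRep M L) :
    dist c c' = |c.height - c'.height| + min c.radius c'.radius * truncDist c.point c'.point := rfl

lemma lipschitzWith_height : LipschitzWith 1 (height : ConeRep M L → ℝ) :=
  LipschitzWith.mk_one fun c c' ↦ le_add_of_nonneg_right <|
    mul_nonneg (le_min c.radius_nonneg c'.radius_nonneg) (truncDist_nonneg _ _)

end ConeRep

section Comparison

variable {M : Type*} [PseudoMetricSpace M]

/-- The length of the chord of the unit circle of angle `min π (dist x y)`. -/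
noncomputable def chordDist (x y : M) : ℝ := 2 * Real.sin (min Real.pi (dist x y) / 2)

lemma half_angle_mem_Icc (x y : M) :
    min Real.pi (dist x y) / 2 ∈ Icc 0 (Real.pi / 2) :=
  ⟨div_nonneg (le_min Real.pi_pos.le dist_nonneg) zero_le_two,
    by gcongr; exact min_le_left _ _⟩

lemma chordDist_nonneg (x y : M) : 0 ≤ chordDist x y := by
  obtain ⟨h₀, h₁⟩ := half_angle_mem_Icc x y
  exact mul_nonneg zero_le_two
    (Real.sin_nonneg_of_nonneg_of_le_pi h₀ (h₁.trans (half_le_self Real.pi_pos.le)))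

lemma chordDist_le_truncDist (x y : M) : chordDist x y ≤ truncDist x y := by
  have hsin := Real.sin_le (half_angle_mem_Icc x y).1
  have hdist := min_le_right Real.pi (dist x y)
  have hone := Real.sin_le_one (min Real.pi (dist x y) / 2)
  exact le_min (by unfold chordDist; linarith) (by unfold chordDist; linarith)

lemma truncDist_le_two_mul_chordDist (x y : M) : truncDist x y ≤ 2 * chordDist x y := by
  obtain ⟨h₀, h₁⟩ := half_angle_mem_Icc x y
  have hsin := Real.mul_le_sin h₀ h₁
  have hδ : truncDist x y ≤ min Real.pi (dist x y) := min_le_min_right _ Real.two_le_pi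
  have hinv : 1 / 2 ≤ 2 / Real.pi := by
    rw [div_le_div_iff₀ two_pos Real.pi_pos]
    linarith [Real.pi_le_four]
  have := mul_le_mul_of_nonneg_right hinv h₀
  unfold chordDist
  linarith

namespace ConeRep

variable {L : ℝ} {c c' : ConeRep M L}

lemma coneDist_sq (hc : c.height ≤ L) (hc' : c'.height ≤ L) :
    coneDist L (c.point, c.height) (c'.point, c'.height) ^ 2 =
      (c.height - c'.height) ^ 2 + c.radius * c'.radius * chordDist c.point c'.point ^ 2 := by
  have law_of_cosines : coneDist L (c.point, c.height) (c'.point, c'.height) =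
      √((c.height - c'.height) ^ 2 + c.radius * c'.radius * chordDist c.point c'.point ^ 2) :=
    congrArg Real.sqrt <| by
      rw [radius_of_le hc, radius_of_le hc', chordDist, mul_pow, Real.sin_sq_eq_half_sub,
        mul_div_cancel₀ _ two_ne_zero]
      ring
  have := mul_nonneg c.radius_nonneg c'.radius_nonneg
  rw [law_of_cosines, Real.sq_sqrt (by positivity)]

lemma coneDist_le_dist (hc : c.height ≤ L) (hc' : c'.height ≤ L) :
    coneDist L (c.point, c.height) (c'.point, c'.height) ≤ dist c c' := by
  refine le_of_sq_le_sq ?_ dist_nonneg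
  rw [coneDist_sq hc hc', dist_def]
  have hm : 0 ≤ min c.radius c'.radius := le_min c.radius_nonneg c'.radius_nonneg
  have hδ := truncDist_nonneg c.point c'.point
  have hchord : chordDist c.point c'.point ^ 2 ≤ truncDist c.point c'.point ^ 2 :=
    pow_le_pow_left₀ (chordDist_nonneg _ _) (chordDist_le_truncDist _ _) 2
  have hradii : c.radius * c'.radius =
      min c.radius c'.radius * (min c.radius c'.radius + |c.height - c'.height|) := by
    rw [← min_mul_max, sub_eq_iff_eq_add'.1 (max_sub_min_eq_abs _ _), radius_of_le hc,
      radius_of_le hc', sub_sub_sub_cancel_left]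
  calc (c.height - c'.height) ^ 2 + c.radius * c'.radius * chordDist c.point c'.point ^ 2
      ≤ |c.height - c'.height| ^ 2 + c.radius * c'.radius * truncDist c.point c'.point ^ 2 := by
        rw [sq_abs]
        gcongr
        exact mul_nonneg c.radius_nonneg c'.radius_nonneg
    _ ≤ (|c.height - c'.height| + min c.radius c'.radius * truncDist c.point c'.point) ^ 2 := by
        have hcross : 0 ≤ |c.height - c'.height| *
            (min c.radius c'.radius * truncDist c.point c'.point) := by
          positivity
        rw [hradii]
        nlinarith [mul_le_mul_of_nonneg_left (truncDist_le_two c.point c'.point) hcross]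

lemma dist_le_three_mul_coneDist (hc : c.height ≤ L) (hc' : c'.height ≤ L) :
    dist c c' ≤ 3 * coneDist L (c.point, c.height) (c'.point, c'.height) := by
  have hnonneg : 0 ≤ coneDist L (c.point, c.height) (c'.point, c'.height) := Real.sqrt_nonneg _
  have hm : 0 ≤ min c.radius c'.radius := le_min c.radius_nonneg c'.radius_nonneg
  have hradii : min c.radius c'.radius ^ 2 ≤ c.radius * c'.radius := by
    rw [sq]
    exact mul_le_mul (min_le_left _ _) (min_le_right _ _) hm c.radius_nonneg
  have hheight : |c.height - c'.height| ≤ coneDist L (c.point, c.height) (c'.point, c'.height) := by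
    refine abs_le_of_sq_le_sq ?_ hnonneg
    rw [coneDist_sq hc hc', le_add_iff_nonneg_right]
    exact mul_nonneg ((sq_nonneg _).trans hradii) (sq_nonneg _)
  have hangle : min c.radius c'.radius * chordDist c.point c'.point ≤
      coneDist L (c.point, c.height) (c'.point, c'.height) := by
    refine le_of_sq_le_sq ?_ hnonneg
    rw [coneDist_sq hc hc', mul_pow]
    exact le_add_of_nonneg_of_le (sq_nonneg _) (mul_le_mul_of_nonneg_right hradii (sq_nonneg _))
  have := mul_le_mul_of_nonneg_left (truncDist_le_two_mul_chordDist c.point c'.point) hm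
  rw [dist_def]
  linarith

end ConeRep

/-- Representatives `(θ, x, t)` of points of `ℝ^ι × K(M)`, with the sup pseudometric. -/
abbrev CylinderRep (ι M : Type*) (L : ℝ) : Type _ := (ι → ℝ) × ConeRep M L

/-- Passage from the triples measured by `cylDist` to the space that carries the pseudometric. -/
@[simps] def toCylinderRep {ι M : Type*} (L : ℝ) : (ι → ℝ) × M × ℝ ≃ CylinderRep ι M L where
  toFun z := (z.1, ⟨z.2.1, z.2.2⟩)
  invFun z := (z.1, z.2.point, z.2.height)

variable {N : ℕ} {L : ℝ}

lemma cylDist_le_two_mul_dist {z w : (Fin N → ℝ) × M × ℝ} (hz : z.2.2 ≤ L) (hw : w.2.2 ≤ L) :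
    cylDist L z w ≤ 2 * dist (toCylinderRep L z) (toCylinderRep L w) := by
  set z' := toCylinderRep L z
  set w' := toCylinderRep L w
  have hcone : coneDist L z.2 w.2 ≤ dist z' w' :=
    (ConeRep.coneDist_le_dist (c := z'.2) (c' := w'.2) hz hw).trans (le_max_right _ _)
  have hθ : dist z.1 w.1 ≤ dist z' w' := le_max_left _ _
  have hnonneg : 0 ≤ coneDist L z.2 w.2 := Real.sqrt_nonneg _
  refine Real.sqrt_le_iff.2 ⟨by positivity, ?_⟩
  nlinarith [dist_nonneg (x := z.1) (y := w.1)]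

lemma dist_le_three_mul_cylDist_s13 {z w : (Fin N → ℝ) × M × ℝ} (hz : z.2.2 ≤ L) (hw : w.2.2 ≤ L) :
    dist (toCylinderRep L z) (toCylinderRep L w) ≤ 3 * cylDist L z w := by
  have hθ : dist z.1 w.1 ≤ cylDist L z w :=
    Real.le_sqrt_of_sq_le (le_add_of_nonneg_right (sq_nonneg _))
  have hcone : coneDist L z.2 w.2 ≤ cylDist L z w :=
    Real.le_sqrt_of_sq_le (le_add_of_nonneg_left (sq_nonneg _))
  refine max_le ?_ ?_
  · exact hθ.trans (by linarith [dist_nonneg.trans hθ])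
  · refine (ConeRep.dist_le_three_mul_coneDist hz hw).trans ?_
    gcongr
    exact hcone

lemma cylDist_eq_zero {z w : (Fin N → ℝ) × M × ℝ} (hz : z.2.2 ≤ L) (hw : w.2.2 ≤ L)
    (h : dist (toCylinderRep L z) (toCylinderRep L w) = 0) : cylDist L z w = 0 :=
  ((cylDist_le_two_mul_dist hz hw).trans_eq (by rw [h, mul_zero])).antisymm (Real.sqrt_nonneg _)

lemma cylDist_le_mul_max {z w z' w' : (Fin N → ℝ) × M × ℝ} {C : ℝ≥0} {d : ℝ} (hz : z.2.2 ≤ L)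
    (hw : w.2.2 ≤ L) (hz' : z'.2.2 ≤ L) (hw' : w'.2.2 ≤ L) (hd : 0 ≤ d)
    (h : dist (toCylinderRep L z') (toCylinderRep L w') ≤
      C * max (dist (toCylinderRep L z) (toCylinderRep L w)) d) :
    cylDist L z' w' ≤ ↑(6 * C) * max (cylDist L z w) d :=
  calc cylDist L z' w'
      ≤ 2 * (C * max (dist (toCylinderRep L z) (toCylinderRep L w)) d) :=
        (cylDist_le_two_mul_dist hz' hw').trans (by gcongr)
    _ ≤ 2 * (C * (3 * max (cylDist L z w) d)) := by
        rw [mul_max_of_nonneg (cylDist L z w) d zero_le_three]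
        gcongr
        · exact dist_le_three_mul_cylDist_s13 hz hw
        · linarith
    _ = ↑(6 * C) * max (cylDist L z w) d := by
        push_cast
        ring

end Comparison

/-! ### Dilation of a simplex from its barycenter -/

section RadialPush

lemma lipschitzOnWith_lineMap_inv_one_sub {E : Type*} [NormedAddCommGroup E] [NormedSpace ℝ E]
    (b : E) :
    LipschitzOnWith 4 (fun q : E × ℝ ↦ AffineMap.lineMap b q.1 (1 - q.2)⁻¹)
      (closedBall b 1 ×ˢ Iic (1 / 4)) := by
  refine LipschitzOnWith.of_dist_le_mul ?_
  rintro ⟨x, e⟩ ⟨-, he⟩ ⟨y, e'⟩ ⟨hy, he'⟩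
  simp only [mem_closedBall', mem_Iic] at he hy he'
  have hinv : (1 - e)⁻¹ ≤ 4 / 3 := inv_le_of_inv_le₀ (by positivity) (by linarith)
  have hpos : 0 ≤ (1 - e)⁻¹ := inv_nonneg.2 (by linarith)
  have hx : dist (AffineMap.lineMap b x (1 - e)⁻¹) (AffineMap.lineMap b y (1 - e)⁻¹) ≤
      4 / 3 * dist x y := by
    simp only [AffineMap.lineMap_apply, vsub_eq_sub, vadd_eq_add, dist_add_right, dist_smul₀,
      dist_sub_right, Real.norm_of_nonneg hpos]
    gcongr
  have he : dist (1 - e)⁻¹ (1 - e')⁻¹ ≤ 16 / 9 * dist e e' := by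
    have hprod : 9 / 16 ≤ (1 - e) * (1 - e') := by nlinarith
    rw [Real.dist_eq, Real.dist_eq, inv_sub_inv (by linarith) (by linarith), abs_div,
      abs_of_pos (by linarith : 0 < (1 - e) * (1 - e')), div_le_iff₀ (by linarith),
      sub_sub_sub_cancel_left]
    nlinarith [abs_nonneg (e - e')]
  have hy : dist (AffineMap.lineMap b y (1 - e)⁻¹) (AffineMap.lineMap b y (1 - e')⁻¹) ≤
      16 / 9 * dist e e' := by
    rw [dist_lineMap_lineMap]
    exact (mul_le_of_le_one_right dist_nonneg hy).trans he
  calc dist (AffineMap.lineMap b x (1 - e)⁻¹) (AffineMap.lineMap b y (1 - e')⁻¹)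
      ≤ 4 / 3 * dist x y + 16 / 9 * dist e e' := (dist_triangle _ _ _).trans (add_le_add hx hy)
    _ ≤ 4 * dist (x, e) (y, e') := by
        have hx := le_max_left (dist x y) (dist e e')
        have he := le_max_right (dist x y) (dist e e')
        rw [Prod.dist_eq]
        linarith [dist_nonneg.trans hx]

variable {ι : Type*} {σ : Finset ι} (hσ : σ.Nonempty) {θ : ι → ℝ} {e : ℝ}

/-- The dilation of the face `σ` by `(1 - e)⁻¹` from its barycenter. It moves `θ` to the
boundary of the face when `e` is the depth of `θ`, see `boundaryDepth`. -/
noncomputable def radialPush (σ : Finset ι) (θ : ι → ℝ) (e : ℝ) : ι → ℝ :=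
  AffineMap.lineMap (σ.centroidWeightsIndicator ℝ) θ (1 - e)⁻¹

@[simp] lemma radialPush_zero (σ : Finset ι) (θ : ι → ℝ) : radialPush σ θ 0 = θ := by
  simp [radialPush]

lemma radialPush_apply_of_mem {j : ι} (hj : j ∈ σ) (he : e < 1) :
    radialPush σ θ e j = (θ j - e / σ.card) / (1 - e) := by
  have he : 1 - e ≠ 0 := by linarith
  simp only [radialPush, AffineMap.pi_lineMap_apply, AffineMap.lineMap_apply_module,
    Finset.centroidWeightsIndicator, Finset.mem_coe, hj, Set.indicator_of_mem,
    Finset.centroidWeights_apply, smul_eq_mul]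
  field_simp
  ring

/-- The barycentric distance of `θ` to the boundary of the face `σ`, normalised to be `1` at the
barycenter. -/
noncomputable def boundaryDepth (θ : ι → ℝ) : ℝ := σ.card * σ.inf' hσ θ

lemma boundaryDepth_le {j : ι} (hj : j ∈ σ) : boundaryDepth hσ θ ≤ σ.card * θ j :=
  mul_le_mul_of_nonneg_left (Finset.inf'_le θ hj) (Nat.cast_nonneg _)

lemma exists_boundaryDepth_eq (θ : ι → ℝ) : ∃ j ∈ σ, boundaryDepth hσ θ = σ.card * θ j := by
  obtain ⟨j, hj, h⟩ := σ.exists_mem_eq_inf' hσ θ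
  exact ⟨j, hj, congrArg (_ * ·) h⟩

lemma boundaryDepth_nonneg (hθ : 0 ≤ θ) : 0 ≤ boundaryDepth hσ θ := by
  obtain ⟨j, -, h⟩ := exists_boundaryDepth_eq hσ θ
  exact h ▸ mul_nonneg (Nat.cast_nonneg _) (hθ j)

lemma radialPush_eq_zero_of_eq_boundaryDepth (he : boundaryDepth hσ θ < 1) :
    ∃ j ∈ σ, radialPush σ θ (boundaryDepth hσ θ) j = 0 := by
  obtain ⟨j, hj, h⟩ := exists_boundaryDepth_eq hσ θ
  have hcard : (σ.card : ℝ) ≠ 0 := by exact_mod_cast hσ.card_ne_zero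
  refine ⟨j, hj, ?_⟩
  rw [radialPush_apply_of_mem hj he, h, mul_div_cancel_left₀ _ hcard, sub_self, zero_div]

variable [Fintype ι]

/-- The face of the standard simplex spanned by the vertices in `σ`. -/
def closedSimplex (σ : Finset ι) : Set (ι → ℝ) := {θ ∈ stdSimplex ℝ ι | ∀ j ∉ σ, θ j = 0}

lemma sum_eq_one_of_mem_closedSimplex (hθ : θ ∈ closedSimplex σ) : ∑ j ∈ σ, θ j = 1 :=
  (Finset.sum_subset σ.subset_univ fun j _ ↦ hθ.2 j).trans hθ.1.2

lemma nonempty_of_mem_closedSimplex (hθ : θ ∈ closedSimplex σ) : σ.Nonempty :=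
  Finset.nonempty_of_sum_ne_zero (sum_eq_one_of_mem_closedSimplex hθ ▸ one_ne_zero)

lemma centroidWeightsIndicator_mem_closedSimplex (hσ : σ.Nonempty) :
    σ.centroidWeightsIndicator ℝ ∈ closedSimplex σ := by
  refine ⟨⟨fun j ↦ ?_, σ.sum_centroidWeightsIndicator_eq_one_of_nonempty ℝ hσ⟩, fun j hj ↦ ?_⟩
  · exact Set.indicator_nonneg (fun _ _ ↦ by simp) j
  · exact Set.indicator_of_notMem (by exact_mod_cast hj) _

lemma dist_le_one_of_mem_stdSimplex {θ' : ι → ℝ} (hθ : θ ∈ stdSimplex ℝ ι)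
    (hθ' : θ' ∈ stdSimplex ℝ ι) : dist θ θ' ≤ 1 :=
  (dist_pi_le_iff zero_le_one).2 fun j ↦
    Real.dist_le_of_mem_Icc_01 (mem_Icc_of_mem_stdSimplex hθ j) (mem_Icc_of_mem_stdSimplex hθ' j)

lemma radialPush_mem_closedSimplex (hθ : θ ∈ closedSimplex σ) (he : e < 1)
    (hdepth : ∀ j ∈ σ, e ≤ σ.card * θ j) : radialPush σ θ e ∈ closedSimplex σ := by
  have hσ := nonempty_of_mem_closedSimplex hθ
  have hcentroid := centroidWeightsIndicator_mem_closedSimplex hσ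
  have hout : ∀ j ∉ σ, radialPush σ θ e j = 0 := fun j hj ↦ by
    rw [radialPush, AffineMap.pi_lineMap_apply, hcentroid.2 j hj, hθ.2 j hj,
      AffineMap.lineMap_same_apply]
  refine ⟨⟨fun j ↦ ?_, ?_⟩, hout⟩
  · by_cases hj : j ∈ σ
    · rw [radialPush_apply_of_mem hj he]
      have hcard : (0 : ℝ) < σ.card := by exact_mod_cast hσ.card_pos
      refine div_nonneg (sub_nonneg.2 ?_) (by linarith)
      exact (div_le_iff₀' hcard).2 (hdepth j hj)
    · exact (hout j hj).ge
  · simp only [radialPush, AffineMap.lineMap_apply_module, Pi.add_apply, Pi.smul_apply, smul_eq_mul,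
      Finset.sum_add_distrib, ← Finset.mul_sum, hθ.1.2, hcentroid.1.2]
    ring

lemma lipschitzOnWith_radialPush (σ : Finset ι) :
    LipschitzOnWith 4 (fun q : (ι → ℝ) × ℝ ↦ radialPush σ q.1 q.2)
      (closedSimplex σ ×ˢ Iic (1 / 4)) := by
  rintro ⟨θ, e⟩ ⟨hθ, he⟩ ⟨θ', e'⟩ ⟨hθ', he'⟩
  have hcentroid := centroidWeightsIndicator_mem_closedSimplex (nonempty_of_mem_closedSimplex hθ)
  exact lipschitzOnWith_lineMap_inv_one_sub _
    ⟨dist_le_one_of_mem_stdSimplex hθ.1 hcentroid.1, he⟩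
    ⟨dist_le_one_of_mem_stdSimplex hθ'.1 hcentroid.1, he'⟩

lemma lipschitzWith_boundaryDepth : LipschitzWith σ.card (boundaryDepth hσ) := by
  refine LipschitzWith.of_le_add_mul _ fun θ θ' ↦ ?_
  obtain ⟨j, hj, h⟩ := exists_boundaryDepth_eq hσ θ'
  have hdist : θ j ≤ θ' j + dist θ θ' := by
    linarith [(le_abs_self _).trans (dist_le_pi_dist θ θ' j)]
  calc boundaryDepth hσ θ ≤ σ.card * θ j := boundaryDepth_le hσ hj
    _ ≤ σ.card * (θ' j + dist θ θ') := by gcongr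
    _ = boundaryDepth hσ θ' + σ.card * dist θ θ' := by rw [h, mul_add]

end RadialPush

/-! ### Contraction and descent in a cone -/

section Contraction

/-- A Lipschitz contraction `f` of `V` to the point `p ∈ V`. Outside `V` the values of `f` only
matter through `mem` and `one`, which lets `f` act on the arbitrary representatives of the vertex
of the cone over `V`. -/
structure IsLipContraction {M : Type*} [PseudoMetricSpace M] (V : Set M) (p : M)
    (f : M → ℝ → M) (K : ℝ≥0) : Prop where
  mem (x : M) (a : ℝ) : f x a ∈ V
  zero {x : M} (hx : x ∈ V) : f x 0 = x
  one (x : M) : f x 1 = p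
  truncDist_le {x y : M} (hx : x ∈ V) (hy : y ∈ V) (a b : ℝ) :
    truncDist (f x a) (f y b) ≤ K * max (truncDist x y) (dist a b)

lemma truncDist_le_mul_max {M : Type*} [PseudoMetricSpace M] {x y x' y' : M} {K d : ℝ}
    (hK : 1 ≤ K) (h : dist x' y' ≤ K * max (dist x y) d) :
    truncDist x' y' ≤ K * max (truncDist x y) d := by
  rcases le_total 2 (dist x y) with hxy | hxy
  · have : 2 ≤ max (truncDist x y) d := le_max_of_le_left (le_min le_rfl hxy)
    exact (truncDist_le_two _ _).trans (by nlinarith)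
  · rw [truncDist, truncDist, min_eq_right hxy]
    exact (min_le_right _ _).trans h

lemma IsLipSDRToPoint.exists_isLipContraction {M : Type*} [MetricSpace M] {V : Set M}
    (hV : IsLipSDRToPoint V) : ∃ p f K, IsLipContraction V p f K := by
  classical
  obtain ⟨p, F, K, hF, hzero, hone, -⟩ := hV
  let retract (x : M) : V := if hx : x ∈ V then ⟨x, hx⟩ else p
  have retract_of_mem {x : M} (hx : x ∈ V) : retract x = ⟨x, hx⟩ := dif_pos hx
  refine ⟨p, fun x a ↦ F (retract x, projIcc 0 1 zero_le_one a), max K 1, fun x a ↦ (F _).2,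
    fun hx ↦ ?_, fun x ↦ ?_, fun {x y} hx hy a b ↦ ?_⟩
  · rw [projIcc_left, retract_of_mem hx]
    exact congrArg Subtype.val (hzero ⟨_, hx⟩)
  · rw [projIcc_right]
    exact congrArg Subtype.val (hone (retract x))
  · refine truncDist_le_mul_max (le_max_right _ _) ?_
    have hproj : dist (projIcc (0 : ℝ) 1 zero_le_one a) (projIcc 0 1 zero_le_one b) ≤ dist a b := by
      simpa using (LipschitzWith.projIcc zero_le_one).dist_le_mul a b
    refine (hF.dist_le_mul _ _).trans ?_
    rw [retract_of_mem hx, retract_of_mem hy]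
    exact mul_le_mul (le_max_left _ _) (max_le_max le_rfl hproj) dist_nonneg (by positivity)

end Contraction

namespace ConeRep

variable {M : Type*} {L : ℝ}

/-- The representatives of the points of the cone over `V`, the vertex being represented by
every point of `M`. -/
def coneOver (V : Set M) (L : ℝ) : Set (ConeRep M L) :=
  {c | c.height ∈ Icc 0 L ∧ (c.height = L ∨ c.point ∈ V)}

lemma radius_eq_zero {c : ConeRep M L} (hc : c.height = L) : c.radius = 0 := by
  simp [radius, hc]

variable [PseudoMetricSpace M] {V : Set M} {p : M} {f : M → ℝ → M} {K : ℝ≥0}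

lemma min_radius_mul_truncDist_contract_le (hf : IsLipContraction V p f K) {c c' : ConeRep M L}
    (hc : c ∈ coneOver V L) (hc' : c' ∈ coneOver V L) (a b : ℝ) :
    min c.radius c'.radius * truncDist (f c.point a) (f c'.point b) ≤
      K * (min c.radius c'.radius * truncDist c.point c'.point) + K * L * dist a b := by
  obtain ⟨hcL, hcV⟩ := hc
  obtain ⟨-, hcV'⟩ := hc'
  have hL : 0 ≤ L := hcL.1.trans hcL.2
  set m := min c.radius c'.radius
  have hm : 0 ≤ m := le_min c.radius_nonneg c'.radius_nonneg
  have hmL : m ≤ L := (min_le_left _ _).trans (radius_le_of_nonneg hL hcL.1)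
  by_cases hvertex : c.height = L ∨ c'.height = L
  · have : m = 0 := hm.antisymm' <| min_le_iff.2 <|
      hvertex.imp (fun h ↦ (radius_eq_zero h).le) (fun h ↦ (radius_eq_zero h).le)
    rw [this, zero_mul, zero_mul, mul_zero, zero_add]
    positivity
  · push Not at hvertex
    have hδ := hf.truncDist_le (hcV.resolve_left hvertex.1) (hcV'.resolve_left hvertex.2) a b
    calc m * truncDist (f c.point a) (f c'.point b)
        ≤ m * (K * (truncDist c.point c'.point + dist a b)) := by
          refine mul_le_mul_of_nonneg_left (hδ.trans ?_) hm
          gcongr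
          exact max_le_add_of_nonneg (truncDist_nonneg _ _) dist_nonneg
      _ = K * (m * truncDist c.point c'.point) + K * m * dist a b := by ring
      _ ≤ K * (m * truncDist c.point c'.point) + K * L * dist a b := by gcongr

lemma lipschitzOnWith_contract (hf : IsLipContraction V p f K) :
    LipschitzOnWith (1 + K + K * L.toNNReal)
      (fun q : ConeRep M L × ℝ ↦ (⟨f q.1.point q.2, q.1.height⟩ : ConeRep M L))
      (coneOver V L ×ˢ univ) := by
  refine LipschitzOnWith.of_dist_le_mul ?_
  rintro ⟨c, a⟩ ⟨hc, -⟩ ⟨c', b⟩ ⟨hc', -⟩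
  have hL : 0 ≤ L := hc.1.1.trans hc.1.2
  have hdist : dist c c' ≤ dist (c, a) (c', b) := le_max_left _ _
  have hab : dist a b ≤ dist (c, a) (c', b) := le_max_right _ _
  have hheight : |c.height - c'.height| ≤ dist c c' := by
    simpa [Real.dist_eq] using lipschitzWith_height.dist_le_mul c c'
  have hangle : min c.radius c'.radius * truncDist c.point c'.point ≤ dist c c' :=
    le_add_of_nonneg_left (abs_nonneg _)
  push_cast [Real.coe_toNNReal L hL]
  calc |c.height - c'.height| + min c.radius c'.radius * truncDist (f c.point a) (f c'.point b)
      ≤ dist c c' + (K * dist c c' + K * L * dist a b) := by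
        refine add_le_add hheight ((min_radius_mul_truncDist_contract_le hf hc hc' a b).trans ?_)
        gcongr
    _ ≤ dist (c, a) (c', b) + (K * dist (c, a) (c', b) + K * L * dist (c, a) (c', b)) := by
        gcongr
    _ = (1 + K + K * L) * dist (c, a) (c', b) := by ring

/-- The pairs of a representative `c` and a descent `s ≤ c.height` that admit a Lipschitz descent
`lipschitzOnWith_descend`: close to the vertex only the ray over `p` may descend, since elsewhere
points which are close to each other would be torn apart. -/
def descentDomain (p : M) (L : ℝ) : Set (ConeRep M L × ℝ) :=
  {q | q.1.height ≤ L ∧ q.2 ∈ Icc 0 q.1.height ∧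
    (q.2 = 0 ∨ q.1.height ≤ L / 2 ∨ q.1.point = p)}

lemma min_radius_descend_mul_truncDist_le {c c' : ConeRep M L} {s s' : ℝ}
    (hc : (c, s) ∈ descentDomain p L) (hc' : (c', s') ∈ descentDomain p L) :
    min (L - (c.height - s)) (L - (c'.height - s')) * truncDist c.point c'.point ≤
      4 * (min c.radius c'.radius * truncDist c.point c'.point) +
        8 * |c.height - c'.height| := by
  obtain ⟨hcL, ⟨hs, hsc⟩, hcs⟩ := hc
  obtain ⟨hcL', ⟨hs', -⟩, hcs'⟩ := hc'
  dsimp only at *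
  rw [radius_of_le hcL, radius_of_le hcL']
  have hδ := truncDist_nonneg c.point c'.point
  have hδ₂ := truncDist_le_two c.point c'.point
  have hm : 0 ≤ min (L - c.height) (L - c'.height) := by simp [hcL, hcL']
  rcases le_or_gt (L / 4) |c.height - c'.height| with hfar | hnear
  · have : min (L - (c.height - s)) (L - (c'.height - s')) ≤ L := by grind
    nlinarith
  by_cases hlow : c.height ≤ 3 * L / 4 ∧ c'.height ≤ 3 * L / 4
  · have : min (L - (c.height - s)) (L - (c'.height - s')) ≤
        4 * min (L - c.height) (L - c'.height) := by grind
    nlinarith [abs_nonneg (c.height - c'.height)]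
  · have hhigh : L / 2 < c.height ∧ L / 2 < c'.height := by grind
    by_cases hp : c.point = p ∧ c'.point = p
    · rw [hp.1, hp.2, truncDist_self]
      simp
    · have : min (L - (c.height - s)) (L - (c'.height - s')) ≤
          min (L - c.height) (L - c'.height) + |c.height - c'.height| := by
        grind
      linarith [mul_nonneg hm hδ, abs_nonneg (c.height - c'.height),
        mul_le_mul_of_nonneg_right this hδ,
        mul_le_mul_of_nonneg_left hδ₂ (abs_nonneg (c.height - c'.height))]

lemma lipschitzOnWith_descend (p : M) :
    LipschitzOnWith 10
      (fun q : ConeRep M L × ℝ ↦ (⟨q.1.point, q.1.height - q.2⟩ : ConeRep M L))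
      (descentDomain p L) := by
  refine LipschitzOnWith.of_dist_le_mul ?_
  rintro ⟨c, s⟩ hc ⟨c', s'⟩ hc'
  have hangle := min_radius_descend_mul_truncDist_le hc hc'
  have hradius {c : ConeRep M L} {s : ℝ} (hc : (c, s) ∈ descentDomain p L) :
      (⟨c.point, c.height - s⟩ : ConeRep M L).radius = L - (c.height - s) :=
    radius_of_le ((sub_le_self _ hc.2.1.1).trans hc.1)
  have hdist : dist c c' ≤ dist (c, s) (c', s') := le_max_left _ _
  have hs : |s - s'| ≤ dist (c, s) (c', s') := le_max_right _ _
  have hheight : |c.height - s - (c'.height - s')| ≤ |c.height - c'.height| + |s - s'| := by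
    rw [sub_sub_sub_comm]
    exact abs_sub _ _
  have hm := mul_nonneg (le_min c.radius_nonneg c'.radius_nonneg)
    (truncDist_nonneg c.point c'.point)
  rw [dist_def] at hdist ⊢
  rw [hradius hc, hradius hc']
  push_cast
  linarith

end ConeRep

/-! ### Retraction of a cell -/

section CellRetraction

variable {ι M : Type*} [Fintype ι] {L : ℝ} {σ : Finset ι} {V : Set M}

/-- The representatives of the points of `σ × K(V)`. -/
def cylinderCell (σ : Finset ι) (V : Set M) (L : ℝ) : Set (CylinderRep ι M L) :=
  closedSimplex σ ×ˢ ConeRep.coneOver V L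

/-- The move of `(θ, x, t)` with parameters `(a, e, s)`: contract `x` along `f` up to time `a`,
dilate the simplex by the parameter `e` of `radialPush`, and descend in the cone by `s`. -/
noncomputable def cellMove (σ : Finset ι) (f : M → ℝ → M) (q : CylinderRep ι M L × ℝ × ℝ × ℝ) :
    CylinderRep ι M L :=
  (radialPush σ q.1.1 q.2.2.1, ⟨f q.1.2.point q.2.1, q.1.2.height - q.2.2.2⟩)

/-- The moves that stay in the cell, with a margin that makes `cellMove` Lipschitz; near the vertex
of the cone, one may descend only after `x` has been contracted completely. -/
def moveDomain (σ : Finset ι) (V : Set M) (L : ℝ) : Set (CylinderRep ι M L × ℝ × ℝ × ℝ) :=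
  {q | q.1 ∈ cylinderCell σ V L ∧ q.2.2.1 ≤ 1 / 4 ∧ (∀ j ∈ σ, q.2.2.1 ≤ σ.card * q.1.1 j) ∧
    q.2.2.2 ∈ Icc 0 q.1.2.height ∧ (q.2.2.2 = 0 ∨ q.1.2.height ≤ L / 2 ∨ q.2.1 = 1)}

lemma mk_zero_mem_moveDomain {z : CylinderRep ι M L} (hz : z ∈ cylinderCell σ V L) :
    (z, 0) ∈ moveDomain σ V L := by
  refine ⟨hz, by norm_num, fun j _ ↦ ?_, ⟨le_rfl, hz.2.1.1⟩, .inl rfl⟩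
  exact mul_nonneg (Nat.cast_nonneg _) (hz.1.1.1 j)

/-- The parameters of the retraction of a cell at time `u`, at a point of depth `D` and height `t`.
The first half of the time contracts, the second half dilates and descends. The final dilation
`min D (t / (4 * L))` reaches the boundary of the simplex where `D ≤ t / (4 * L)`, and the final
descent `min t (max 0 (8 * L * D - t))` reaches the base of the cone where `t / (4 * L) ≤ D`. All
parameters vanish on the boundary of the simplex and on the base of the cone. -/
noncomputable def moveSchedule (hσ : σ.Nonempty) (z : CylinderRep ι M L) (u : unitInterval) :
    ℝ × ℝ × ℝ :=
  let D := boundaryDepth hσ z.1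
  let t := z.2.height
  let u' := max 0 (2 * (u : ℝ) - 1)
  (min (min 1 (16 * min D (t / (4 * L)))) (2 * u), min (min D (t / (4 * L))) u',
    min (min t (max 0 (8 * L * D - t))) (L * u'))

section Schedule

variable {hσ : σ.Nonempty} {z : CylinderRep ι M L}

lemma moveSchedule_mem_moveDomain (hL : 0 < L) (hz : z ∈ cylinderCell σ V L) (u : unitInterval) :
    (z, moveSchedule hσ z u) ∈ moveDomain σ V L := by
  obtain ⟨ht₀, htL⟩ := hz.2.1
  have ht : z.2.height / (4 * L) ≤ 1 / 4 := by
    rw [div_le_div_iff₀ (by positivity) (by norm_num)]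
    linarith
  refine ⟨hz, ?_, fun j hj ↦ ?_, ⟨?_, ?_⟩, ?_⟩ <;> dsimp only [moveSchedule]
  · exact (min_le_left _ _).trans ((min_le_right _ _).trans ht)
  · exact (min_le_left _ _).trans ((min_le_left _ _).trans (boundaryDepth_le hσ hj))
  · exact le_min (le_min ht₀ (le_max_left _ _)) (mul_nonneg hL.le (le_max_left _ _))
  · exact (min_le_left _ _).trans (min_le_left _ _)
  by_cases hu : 2 * (u : ℝ) - 1 ≤ 0
  · left
    rw [max_eq_left hu, mul_zero]
    exact min_eq_right (le_min ht₀ (le_max_left _ _))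
  by_cases hlow : z.2.height ≤ L / 2
  · exact .inr (.inl hlow)
  by_cases hshallow : 8 * L * boundaryDepth hσ z.1 ≤ z.2.height
  · left
    rw [max_eq_left (sub_nonpos.2 hshallow), min_eq_right ht₀]
    exact min_eq_left (mul_nonneg hL.le (le_max_left _ _))
  · right; right
    have hdepth : 1 / 16 ≤ boundaryDepth hσ z.1 := by nlinarith
    have hheight : 1 / 16 ≤ z.2.height / (4 * L) := by
      rw [le_div_iff₀ (by positivity)]
      linarith
    rw [min_eq_left (by linarith [le_min hdepth hheight] :
      1 ≤ 16 * min (boundaryDepth hσ z.1) (z.2.height / (4 * L)))]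
    exact min_eq_left (by linarith)

lemma moveSchedule_zero (hL : 0 ≤ L) (hz : z ∈ cylinderCell σ V L) : moveSchedule hσ z 0 = 0 := by
  have hD := boundaryDepth_nonneg hσ hz.1.1.1
  have ht := hz.2.1.1
  have he : 0 ≤ min (boundaryDepth hσ z.1) (z.2.height / (4 * L)) := le_min hD (by positivity)
  have hh : 0 ≤ min 1 (16 * min (boundaryDepth hσ z.1) (z.2.height / (4 * L))) :=
    le_min zero_le_one (by positivity)
  simp [moveSchedule, he, hh, ht]

lemma moveSchedule_of_height_eq_zero (hL : 0 ≤ L) (hz : z ∈ cylinderCell σ V L)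
    (ht : z.2.height = 0) (u : unitInterval) : moveSchedule hσ z u = 0 := by
  have hD := boundaryDepth_nonneg hσ hz.1.1.1
  have hu := u.2.1
  simp [moveSchedule, ht, hD, hu, hL, mul_nonneg]

lemma moveSchedule_one (hL : 0 < L) (hz : z ∈ cylinderCell σ V L) :
    boundaryDepth hσ z.1 < 1 ∧ (moveSchedule hσ z 1).2.1 = boundaryDepth hσ z.1 ∨
      (moveSchedule hσ z 1).2.2 = z.2.height := by
  have htL := hz.2.1.2
  have ht : z.2.height / (4 * L) ≤ 1 / 4 := by
    rw [div_le_div_iff₀ (by positivity) (by norm_num)]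
    linarith
  have hone : max 0 (2 * ((1 : unitInterval) : ℝ) - 1) = 1 := by norm_num
  rcases le_total (boundaryDepth hσ z.1) (z.2.height / (4 * L)) with hD | hD
  · left
    dsimp only [moveSchedule]
    rw [hone, min_eq_left hD]
    exact ⟨by linarith, min_eq_left (by linarith)⟩
  · right
    dsimp only [moveSchedule]
    rw [div_le_iff₀ (by positivity)] at hD
    rw [hone, min_eq_left (le_max_of_le_right (by linarith)), mul_one, min_eq_left htL]

lemma dist_moveSchedule_zero_le (hL : 0 ≤ L) (hz : z ∈ cylinderCell σ V L) (u : unitInterval) :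
    dist (moveSchedule hσ z u) 0 ≤ max 16 (8 * L) * boundaryDepth hσ z.1 := by
  have hD := boundaryDepth_nonneg hσ hz.1.1.1
  have ht := hz.2.1.1
  have hu := u.2.1
  have h16 := mul_le_mul_of_nonneg_right (le_max_left 16 (8 * L)) hD
  have h8 := mul_le_mul_of_nonneg_right (le_max_right 16 (8 * L)) hD
  have he : min (boundaryDepth hσ z.1) (z.2.height / (4 * L)) ≤ boundaryDepth hσ z.1 :=
    min_le_left _ _
  have hs : max 0 (8 * L * boundaryDepth hσ z.1 - z.2.height) ≤ 8 * L * boundaryDepth hσ z.1 :=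
    max_le (by positivity) (by linarith)
  refine max_le ?_ (max_le ?_ ?_) <;>
    simp only [moveSchedule, Prod.fst_zero, Prod.snd_zero, dist_zero_right, Real.norm_eq_abs]
  · rw [abs_of_nonneg (by positivity)]
    exact (min_le_left _ _).trans ((min_le_right _ _).trans (by linarith))
  · rw [abs_of_nonneg (by positivity)]
    exact (min_le_left _ _).trans (by linarith)
  · rw [abs_of_nonneg (by positivity)]
    exact (min_le_left _ _).trans ((min_le_right _ _).trans (hs.trans h8))

end Schedule

variable [PseudoMetricSpace M] {p : M} {f : M → ℝ → M} {K : ℝ≥0}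

lemma exists_lipschitzWith_moveSchedule (hσ : σ.Nonempty) :
    ∃ C, LipschitzWith C
      (fun q : CylinderRep ι M L × unitInterval ↦ moveSchedule hσ q.1 q.2) := by
  have hD : LipschitzWith _ fun q : CylinderRep ι M L × unitInterval ↦ boundaryDepth hσ q.1.1 :=
    (lipschitzWith_boundaryDepth hσ).comp (LipschitzWith.prod_fst.comp LipschitzWith.prod_fst)
  have ht : LipschitzWith _ fun q : CylinderRep ι M L × unitInterval ↦ q.1.2.height :=
    ConeRep.lipschitzWith_height.comp (LipschitzWith.prod_snd.comp LipschitzWith.prod_fst)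
  have hu : LipschitzWith _ fun q : CylinderRep ι M L × unitInterval ↦ 2 * (q.2 : ℝ) :=
    (lipschitzWith_smul (2 : ℝ)).comp (LipschitzWith.subtype_val _ |>.comp LipschitzWith.prod_snd)
  have hu' := (hu.sub (LipschitzWith.const (1 : ℝ))).const_max 0
  have he := hD.min ((lipschitzWith_smul (4 * L)⁻¹).comp ht)
  have hs := ht.min ((((lipschitzWith_smul (8 * L)).comp hD).sub ht).const_max 0)
  have hschedule := ((((lipschitzWith_smul (16 : ℝ)).comp he).const_min 1).min hu).prodMk
    ((he.min hu').prodMk (hs.min ((lipschitzWith_smul L).comp hu')))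
  simp only [moveSchedule, div_eq_inv_mul]
  exact ⟨_, hschedule⟩

lemma cellMove_mem_cylinderCell (hf : IsLipContraction V p f K)
    {q : CylinderRep ι M L × ℝ × ℝ × ℝ} (hq : q ∈ moveDomain σ V L) :
    cellMove σ f q ∈ cylinderCell σ V L := by
  obtain ⟨⟨hθ, ht, -⟩, he, hdepth, hs, -⟩ := hq
  exact ⟨radialPush_mem_closedSimplex hθ (by linarith) hdepth,
    ⟨sub_nonneg.2 hs.2, (sub_le_self _ hs.1).trans ht.2⟩, .inr (hf.mem _ _)⟩

lemma dist_cellMove_zero (hf : IsLipContraction V p f K) {z : CylinderRep ι M L}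
    (hz : z ∈ cylinderCell σ V L) : dist (cellMove σ f (z, 0)) z = 0 := by
  obtain ⟨-, -, hvertex | hV⟩ := hz
  · simp [cellMove, Prod.dist_eq, ConeRep.dist_def, ConeRep.radius, hvertex]
  · simp [cellMove, hf.zero hV]

lemma exists_lipschitzOnWith_cellMove (hf : IsLipContraction V p f K) :
    ∃ C, LipschitzOnWith C (cellMove σ f) (moveDomain σ V L) := by
  have hθ : LipschitzWith _ fun q : CylinderRep ι M L × ℝ × ℝ × ℝ ↦ q.1.1 :=
    LipschitzWith.prod_fst.comp LipschitzWith.prod_fst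
  have hc : LipschitzWith _ fun q : CylinderRep ι M L × ℝ × ℝ × ℝ ↦ q.1.2 :=
    LipschitzWith.prod_snd.comp LipschitzWith.prod_fst
  have ha : LipschitzWith _ fun q : CylinderRep ι M L × ℝ × ℝ × ℝ ↦ q.2.1 :=
    LipschitzWith.prod_fst.comp LipschitzWith.prod_snd
  have he : LipschitzWith _ fun q : CylinderRep ι M L × ℝ × ℝ × ℝ ↦ q.2.2.1 :=
    LipschitzWith.prod_fst.comp (LipschitzWith.prod_snd.comp LipschitzWith.prod_snd)
  have hs : LipschitzWith _ fun q : CylinderRep ι M L × ℝ × ℝ × ℝ ↦ q.2.2.2 :=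
    LipschitzWith.prod_snd.comp (LipschitzWith.prod_snd.comp LipschitzWith.prod_snd)
  have hpush := (lipschitzOnWith_radialPush σ).comp (hθ.prodMk he).lipschitzOnWith
    (s := moveDomain σ V L) fun q hq ↦ ⟨hq.1.1, hq.2.1⟩
  have hcontract := (ConeRep.lipschitzOnWith_contract hf).comp (hc.prodMk ha).lipschitzOnWith
    (s := moveDomain σ V L) fun q hq ↦ ⟨hq.1.2, mem_univ _⟩
  have hdescend := (ConeRep.lipschitzOnWith_descend p).comp
    (hcontract.prodMk hs.lipschitzOnWith) fun q hq ↦ ⟨hq.1.2.1.2, hq.2.2.2.1,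
      hq.2.2.2.2.imp_right <| Or.imp_right fun h ↦ by simp [h, hf.one]⟩
  exact ⟨_, hpush.prodMk hdescend⟩

/-- `ψ` is a `C`-Lipschitz deformation of `σ × K(V)` which at time `1` reaches the base of the cone
or the boundary of the simplex, fixes the base of the cone, and displaces the other points by at
most `C` times any barycentric coordinate. -/
structure IsCellRetraction (σ : Finset ι) (V : Set M) (L : ℝ) (C : ℝ≥0)
    (ψ : CylinderRep ι M L × unitInterval → CylinderRep ι M L) : Prop where
  lipschitzOnWith : LipschitzOnWith C ψ (cylinderCell σ V L ×ˢ univ)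
  mem {z : CylinderRep ι M L} (hz : z ∈ cylinderCell σ V L) (u : unitInterval) :
    ψ (z, u) ∈ cylinderCell σ V L
  zero {z : CylinderRep ι M L} (hz : z ∈ cylinderCell σ V L) : dist (ψ (z, 0)) z = 0
  one {z : CylinderRep ι M L} (hz : z ∈ cylinderCell σ V L) :
    (ψ (z, 1)).2.height = 0 ∨ ∃ j ∈ σ, (ψ (z, 1)).1 j = 0
  base {z : CylinderRep ι M L} (hz : z ∈ cylinderCell σ V L) (ht : z.2.height = 0)
    (u : unitInterval) : dist (ψ (z, u)) z = 0
  dist_le {z : CylinderRep ι M L} (hz : z ∈ cylinderCell σ V L) (u : unitInterval) {j : ι}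
    (hj : j ∈ σ) : dist (ψ (z, u)) z ≤ C * z.1 j

lemma dist_cellMove_moveSchedule_le (hf : IsLipContraction V p f K) {hσ : σ.Nonempty} (hL : 0 < L)
    {C : ℝ≥0} (hC : LipschitzOnWith C (cellMove σ f) (moveDomain σ V L))
    {z : CylinderRep ι M L} (hz : z ∈ cylinderCell σ V L) (u : unitInterval) {j : ι} (hj : j ∈ σ) :
    dist (cellMove σ f (z, moveSchedule hσ z u)) z ≤ C * (max 16 (8 * L) * σ.card) * z.1 j :=
  calc dist (cellMove σ f (z, moveSchedule hσ z u)) z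
      ≤ dist (cellMove σ f (z, moveSchedule hσ z u)) (cellMove σ f (z, 0)) :=
        (dist_triangle _ _ _).trans_eq (by rw [dist_cellMove_zero hf hz, add_zero])
    _ ≤ C * dist (moveSchedule hσ z u) 0 := by
        simpa using hC.dist_le_mul _ (moveSchedule_mem_moveDomain hL hz u) _
          (mk_zero_mem_moveDomain hz)
    _ ≤ C * (max 16 (8 * L) * (σ.card * z.1 j)) := by
        have := boundaryDepth_le hσ hj (θ := z.1)
        gcongr
        exact (dist_moveSchedule_zero_le hL.le hz u).trans (by gcongr)
    _ = C * (max 16 (8 * L) * σ.card) * z.1 j := by ring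

lemma IsLipContraction.exists_isCellRetraction (hf : IsLipContraction V p f K) (hσ : σ.Nonempty)
    (hL : 0 < L) : ∃ C ψ, IsCellRetraction σ V L C ψ := by
  obtain ⟨C, hC⟩ := exists_lipschitzOnWith_cellMove (σ := σ) (L := L) hf
  obtain ⟨C', hC'⟩ := exists_lipschitzWith_moveSchedule (M := M) (L := L) hσ
  have hψ := hC.comp (LipschitzWith.prod_fst.prodMk hC').lipschitzOnWith
    (s := cylinderCell σ V L ×ˢ univ) fun q hq ↦ moveSchedule_mem_moveDomain hL hq.1 q.2
  refine ⟨max (C * max 1 C') (C * ((max 16 (8 * L)).toNNReal * σ.card)),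
    fun q ↦ cellMove σ f (q.1, moveSchedule hσ q.1 q.2), hψ.weaken (le_max_left _ _),
    fun hz u ↦ cellMove_mem_cylinderCell hf (moveSchedule_mem_moveDomain hL hz u),
    fun {z} hz ↦ ?_, fun {z} hz ↦ ?_, fun {z} hz ht u ↦ ?_, fun {z} hz u {j} hj ↦ ?_⟩
  · dsimp only
    rw [moveSchedule_zero hL.le hz]
    exact dist_cellMove_zero hf hz
  · rcases moveSchedule_one hL hz (hσ := hσ) with ⟨hD, he⟩ | hs
    · right
      simpa only [cellMove, he] using radialPush_eq_zero_of_eq_boundaryDepth hσ hD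
    · left
      simp only [cellMove, hs, sub_self]
  · dsimp only
    rw [moveSchedule_of_height_eq_zero hL.le hz ht]
    exact dist_cellMove_zero hf hz
  · refine (dist_cellMove_moveSchedule_le hf hL hC hz u hj).trans ?_
    refine mul_le_mul_of_nonneg_right ?_ (hz.1.1.1 j)
    push_cast [Real.coe_toNNReal _ (le_max_of_le_left (by norm_num : (0 : ℝ) ≤ 16))]
    exact le_max_right _ _

end CellRetraction

/-! ### Gluing over the skeleton -/

section Skeleton

lemma lipschitzOnWith_of_eqOn {X Y : Type*} [PseudoEMetricSpace X] [PseudoEMetricSpace Y]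
    {f g : X → Y} {S : Set X} {C : ℝ≥0} (hg : LipschitzOnWith C g S) (h : EqOn f g S) :
    LipschitzOnWith C f S := fun x hx y hy ↦ by
  rw [h hx, h hy]
  exact hg hx hy

lemma lipschitzOnWith_of_strata {X T κ : Type*} [PseudoMetricSpace X] [PseudoMetricSpace T]
    {Φ : X × T → X} {S : Set X} {C : ℝ≥0} (label : X → κ)
    (hsame : ∀ i, LipschitzOnWith C Φ ((S ∩ label ⁻¹' {i}) ×ˢ univ))
    (hdiff : ∀ z ∈ S, ∀ w ∈ S, label z ≠ label w → ∀ s, dist (Φ (z, s)) z ≤ C * dist z w) :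
    LipschitzOnWith (2 * C + 1) Φ (S ×ˢ univ) := by
  refine LipschitzOnWith.of_dist_le_mul ?_
  rintro ⟨z, s⟩ ⟨hz, -⟩ ⟨w, t⟩ ⟨hw, -⟩
  have hdist : dist z w ≤ dist (z, s) (w, t) := le_max_left _ _
  push_cast
  by_cases h : label z = label w
  · have := (hsame (label w)).dist_le_mul (z, s) ⟨⟨hz, h⟩, mem_univ s⟩ (w, t)
      ⟨⟨hw, rfl⟩, mem_univ t⟩
    refine this.trans (mul_le_mul_of_nonneg_right ?_ dist_nonneg)
    linarith [C.coe_nonneg]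
  · have hzw := hdiff z hz w hw h s
    have hwz := hdiff w hw z hz (Ne.symm h) t
    rw [dist_comm w z] at hwz
    calc dist (Φ (z, s)) (Φ (w, t))
        ≤ dist (Φ (z, s)) z + dist z w + dist w (Φ (w, t)) := dist_triangle4 _ _ _ _
      _ ≤ (2 * C + 1) * dist z w := by
        rw [dist_comm w]
        linarith
      _ ≤ (2 * C + 1) * dist (z, s) (w, t) := by gcongr

variable {ι M : Type*} [Fintype ι] {L : ℝ} {U : ι → Set M} {k : ℕ} {s : Finset ι}

/-- The vertex set of the open face of the simplex that contains `θ`. -/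
noncomputable def carrierFace (θ : ι → ℝ) : Finset ι := {j | θ j ≠ 0}

lemma mem_carrierFace {θ : ι → ℝ} {j : ι} : j ∈ carrierFace θ ↔ θ j ≠ 0 := by simp [carrierFace]

lemma notMem_carrierFace {θ : ι → ℝ} {j : ι} : j ∉ carrierFace θ ↔ θ j = 0 := by simp [carrierFace]

lemma carrierFace_subset_of_mem_closedSimplex {θ : ι → ℝ} (hθ : θ ∈ closedSimplex s) :
    carrierFace θ ⊆ s := fun j hj ↦ by
  by_contra hjs
  exact mem_carrierFace.1 hj (hθ.2 j hjs)

/-- The representatives of the points of `M(p^k)`. -/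
def cylinderSkeleton (U : ι → Set M) (L : ℝ) (k : ℕ) : Set (CylinderRep ι M L) :=
  {z | ∃ s : Finset ι, s.card ≤ k + 1 ∧ (⋂ j ∈ s, U j).Nonempty ∧
    z ∈ cylinderCell s (⋂ j ∈ s, U j) L}

lemma mem_cylinderCell_of_carrierFace_subset {t : Finset ι} {z : CylinderRep ι M L}
    (hz : z ∈ cylinderCell s (⋂ j ∈ s, U j) L) (hts : t ⊆ s) (ht : carrierFace z.1 ⊆ t) :
    z ∈ cylinderCell t (⋂ j ∈ t, U j) L :=
  ⟨⟨hz.1.1, fun _ hj ↦ notMem_carrierFace.1 fun hj' ↦ hj (ht hj')⟩, hz.2.1,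
    hz.2.2.imp_right fun h ↦ biInter_subset_biInter_left hts h⟩

lemma mem_cylinderSkeleton_iff {z : CylinderRep ι M L} :
    z ∈ cylinderSkeleton U L k ↔
      (carrierFace z.1).card ≤ k + 1 ∧ (⋂ j ∈ carrierFace z.1, U j).Nonempty ∧
        z ∈ cylinderCell (carrierFace z.1) (⋂ j ∈ carrierFace z.1, U j) L := by
  refine ⟨fun ⟨s, hs, hV, hz⟩ ↦ ?_, fun h ↦ ⟨_, h⟩⟩
  have hsub := carrierFace_subset_of_mem_closedSimplex hz.1
  exact ⟨(Finset.card_le_card hsub).trans hs, hV.mono (biInter_subset_biInter_left hsub),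
    mem_cylinderCell_of_carrierFace_subset hz hsub subset_rfl⟩

/-- The deformation of the skeleton that moves the points of each open simplex `s` with `k + 1`
vertices by `ψ s` and fixes everything else. -/
noncomputable def glueCells (k : ℕ)
    (ψ : Finset ι → CylinderRep ι M L × unitInterval → CylinderRep ι M L)
    (q : CylinderRep ι M L × unitInterval) : CylinderRep ι M L :=
  if (carrierFace q.1.1).card = k + 1 then ψ (carrierFace q.1.1) q else q.1

variable [PseudoMetricSpace M] {C : ℝ≥0}

lemma IsCellRetraction.weaken {σ : Finset ι} {V : Set M} {C' : ℝ≥0}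
    {ψ : CylinderRep ι M L × unitInterval → CylinderRep ι M L} (hψ : IsCellRetraction σ V L C ψ)
    (hC : C ≤ C') : IsCellRetraction σ V L C' ψ where
  __ := hψ
  lipschitzOnWith := hψ.lipschitzOnWith.weaken hC
  dist_le hz u _ hj := (hψ.dist_le hz u hj).trans <|
    mul_le_mul_of_nonneg_right (by exact_mod_cast hC) (hz.1.1.1 _)

lemma exists_isCellRetraction_forall (hL : 0 < L)
    (hU : ∀ s : Finset ι, s.card = k + 1 → (⋂ j ∈ s, U j).Nonempty →
      ∃ p f K, IsLipContraction (⋂ j ∈ s, U j) p f K) :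
    ∃ (C : ℝ≥0) (ψ : Finset ι → CylinderRep ι M L × unitInterval → CylinderRep ι M L),
      ∀ s : Finset ι, s.card = k + 1 → (⋂ j ∈ s, U j).Nonempty →
        IsCellRetraction s (⋂ j ∈ s, U j) L C (ψ s) := by
  have hcell (s : Finset ι) (hs : s.card = k + 1) (hV : (⋂ j ∈ s, U j).Nonempty) :
      ∃ C ψ, IsCellRetraction s (⋂ j ∈ s, U j) L C ψ := by
    obtain ⟨p, f, K, hf⟩ := hU s hs hV
    exact hf.exists_isCellRetraction (Finset.card_pos.1 (by lia)) hL
  have : Nonempty (CylinderRep ι M L × unitInterval → CylinderRep ι M L) := ⟨Prod.fst⟩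
  choose! C ψ hψ using hcell
  exact ⟨Finset.univ.sup C, ψ, fun s hs hV ↦
    (hψ s hs hV).weaken (Finset.le_sup (Finset.mem_univ s))⟩

section Glue

variable {ψ : Finset ι → CylinderRep ι M L × unitInterval → CylinderRep ι M L}
  (hψ : ∀ s : Finset ι, s.card = k + 1 → (⋂ j ∈ s, U j).Nonempty →
    IsCellRetraction s (⋂ j ∈ s, U j) L C (ψ s))
  {z : CylinderRep ι M L}

include hψ

lemma glueCells_mem (hz : z ∈ cylinderSkeleton U L k) (u : unitInterval) :
    glueCells k ψ (z, u) ∈ cylinderSkeleton U L k := by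
  obtain ⟨-, hV, hzc⟩ := mem_cylinderSkeleton_iff.1 hz
  unfold glueCells
  split_ifs with h
  · exact ⟨_, h.le, hV, (hψ _ h hV).mem hzc u⟩
  · exact hz

lemma dist_glueCells_zero (hz : z ∈ cylinderSkeleton U L k) :
    dist (glueCells k ψ (z, 0)) z = 0 := by
  obtain ⟨-, hV, hzc⟩ := mem_cylinderSkeleton_iff.1 hz
  unfold glueCells
  split_ifs with h
  · exact (hψ _ h hV).zero hzc
  · exact dist_self z

lemma glueCells_one (hk : 1 ≤ k) (hz : z ∈ cylinderSkeleton U L k) :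
    (glueCells k ψ (z, 1)).2.height = 0 ∨
      glueCells k ψ (z, 1) ∈ cylinderSkeleton U L (k - 1) := by
  classical
  obtain ⟨hcard, hV, hzc⟩ := mem_cylinderSkeleton_iff.1 hz
  unfold glueCells
  split_ifs with h
  · refine ((hψ _ h hV).one hzc).imp_right fun ⟨j, hj, hj₀⟩ ↦ ?_
    have hmem := (hψ _ h hV).mem hzc 1
    have herase := Finset.erase_subset j (carrierFace z.1)
    refine ⟨(carrierFace z.1).erase j, ?_, hV.mono (biInter_subset_biInter_left herase),
      mem_cylinderCell_of_carrierFace_subset hmem herase <| Finset.subset_erase.2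
        ⟨carrierFace_subset_of_mem_closedSimplex hmem.1, notMem_carrierFace.2 hj₀⟩⟩
    rw [Finset.card_erase_of_mem hj]
    lia
  · dsimp only at h
    exact .inr ⟨_, by lia, hV, hzc⟩

lemma dist_glueCells_eq_zero (hk : 1 ≤ k) (hz : z ∈ cylinderSkeleton U L k)
    (hz' : z.2.height = 0 ∨ z ∈ cylinderSkeleton U L (k - 1)) (u : unitInterval) :
    dist (glueCells k ψ (z, u)) z = 0 := by
  obtain ⟨-, hV, hzc⟩ := mem_cylinderSkeleton_iff.1 hz
  unfold glueCells
  split_ifs with h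
  · rcases hz' with hbase | hlow
    · exact (hψ _ h hV).base hzc hbase u
    · have := (mem_cylinderSkeleton_iff.1 hlow).1
      dsimp only at h
      lia
  · exact dist_self z

lemma dist_glueCells_le {w : CylinderRep ι M L} (hz : z ∈ cylinderSkeleton U L k)
    (hw : w ∈ cylinderSkeleton U L k) (hzw : carrierFace z.1 ≠ carrierFace w.1) (u : unitInterval) :
    dist (glueCells k ψ (z, u)) z ≤ C * dist z w := by
  obtain ⟨-, hV, hzc⟩ := mem_cylinderSkeleton_iff.1 hz
  unfold glueCells
  split_ifs with h
  · have hcard : (carrierFace w.1).card ≤ (carrierFace z.1).card :=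
      (mem_cylinderSkeleton_iff.1 hw).1.trans h.ge
    obtain ⟨j, hjz, hjw⟩ := Finset.not_subset.1 fun hsub ↦
      hzw (Finset.eq_of_subset_of_card_le hsub hcard)
    have hj : z.1 j ≤ dist z w := by
      have hdist : dist (z.1 j) (w.1 j) ≤ dist z w :=
        (dist_le_pi_dist z.1 w.1 j).trans (le_max_left _ _)
      rw [notMem_carrierFace.1 hjw, Real.dist_0_eq_abs] at hdist
      exact (le_abs_self _).trans hdist
    exact ((hψ _ h hV).dist_le hzc u hjz).trans (by gcongr)
  · rw [dist_self]
    positivity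

lemma lipschitzOnWith_glueCells :
    LipschitzOnWith (2 * max C 1 + 1) (glueCells k ψ) (cylinderSkeleton U L k ×ˢ univ) := by
  refine lipschitzOnWith_of_strata (fun z ↦ carrierFace z.1) (fun s ↦ ?_) fun z hz w hw hzw u ↦
    (dist_glueCells_le hψ hz hw hzw u).trans (by gcongr; exact le_max_left _ _)
  by_cases h : s.card = k + 1 ∧ (⋂ j ∈ s, U j).Nonempty
  · refine lipschitzOnWith_of_eqOn
      (((hψ s h.1 h.2).lipschitzOnWith.mono ?_).weaken (le_max_left _ _)) ?_
    · rintro ⟨z, u⟩ ⟨⟨hz, rfl⟩, -⟩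
      exact ⟨(mem_cylinderSkeleton_iff.1 hz).2.2, mem_univ u⟩
    · rintro ⟨z, u⟩ ⟨⟨-, rfl⟩, -⟩
      exact if_pos h.1
  · refine lipschitzOnWith_of_eqOn
      (LipschitzWith.prod_fst.lipschitzOnWith.weaken (le_max_right _ _)) ?_
    rintro ⟨z, u⟩ ⟨⟨hz, rfl⟩, -⟩
    exact if_neg fun hcard ↦ h ⟨hcard, (mem_cylinderSkeleton_iff.1 hz).2.1⟩

end Glue

end Skeleton

section Representatives

variable {M : Type*} [MetricSpace M] {N : ℕ} {U : Fin N → Set M} {L : ℝ} {k : ℕ}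
  {z : (Fin N → ℝ) × M × ℝ}

lemma inCylK_iff : InCylK U L k z ↔ toCylinderRep L z ∈ cylinderSkeleton U L k := by
  constructor
  · rintro ⟨⟨hθ, hsum, -⟩, ht, s, hs, hsupp, hV, hx⟩
    exact ⟨s, hs, hV, ⟨⟨fun j ↦ (hθ j).1, hsum⟩, fun j ↦ not_imp_comm.1 (hsupp j)⟩, ht, hx⟩
  · rintro ⟨s, hs, hV, ⟨hθ, hsupp⟩, ht, hx⟩
    have hsupp (j : Fin N) : z.1 j ≠ 0 → j ∈ s := not_imp_comm.1 (hsupp j)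
    exact ⟨⟨mem_Icc_of_mem_stdSimplex hθ, hθ.2, hV.mono (biInter_subset_biInter_left hsupp)⟩,
      ht, s, hs, hsupp, hV, hx⟩

lemma InCylK.inDZeroK (hz : InCylK U L k z) (hL : 0 < L) (ht : z.2.2 = 0) : InDZeroK U k z := by
  obtain ⟨hθ, -, s, hs, hsupp, -, hx⟩ := hz
  refine ⟨hθ, ?_, ht, biInter_subset_biInter_left hsupp (hx.resolve_left (by linarith))⟩
  exact (ncard_le_ncard hsupp s.finite_toSet).trans (by simpa using hs)

end Representatives

theorem skeleton_cylinder_lipSDR_general {M : Type*} [MetricSpace M]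
    {N : ℕ} (U : Fin N → Set M) (L : ℝ) (hL : 0 < L) (k : ℕ) (hk : 1 ≤ k)
    (hU : ∀ s : Finset (Fin N), s.card = k + 1 → (⋂ j ∈ s, U j).Nonempty →
      IsLipSDRToPoint (⋂ j ∈ s, U j)) :
    ∃ (Φ : ((Fin N → ℝ) × M × ℝ) × unitInterval → (Fin N → ℝ) × M × ℝ) (K : NNReal),
      (∀ z, InCylK U L k z → ∀ t : unitInterval, InCylK U L k (Φ (z, t))) ∧
      (∀ z w, InCylK U L k z → InCylK U L k w → ∀ s t : unitInterval,
        cylDist L (Φ (z, s)) (Φ (w, t)) ≤ K * max (cylDist L z w) (dist s t)) ∧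
      (∀ z, InCylK U L k z → cylDist L (Φ (z, 0)) z = 0) ∧
      (∀ z, InCylK U L k z →
        (InDZeroK U k (Φ (z, 1)) ∨ InCylK U L (k - 1) (Φ (z, 1)))) ∧
      (∀ z, InCylK U L k z → (InDZeroK U k z ∨ InCylK U L (k - 1) z) →
        ∀ t : unitInterval, cylDist L (Φ (z, t)) z = 0) := by
  obtain ⟨C, ψ, hψ⟩ := exists_isCellRetraction_forall hL
    fun s hs hV ↦ (hU s hs hV).exists_isLipContraction
  let Φ : ((Fin N → ℝ) × M × ℝ) × unitInterval → (Fin N → ℝ) × M × ℝ :=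
    fun q ↦ (toCylinderRep L).symm (glueCells k ψ (toCylinderRep L q.1, q.2))
  have hmem (z) (hz : InCylK U L k z) (t : unitInterval) : InCylK U L k (Φ (z, t)) :=
    inCylK_iff.2 (glueCells_mem hψ (inCylK_iff.1 hz) t)
  refine ⟨Φ, 6 * (2 * max C 1 + 1), hmem, fun z w hz hw s t ↦ ?_, fun z hz ↦ ?_, fun z hz ↦ ?_,
    fun z hz hz' t ↦ ?_⟩
  · exact cylDist_le_mul_max hz.2.1.2 hw.2.1.2 (hmem z hz s).2.1.2 (hmem w hw t).2.1.2 dist_nonneg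
      ((lipschitzOnWith_glueCells hψ).dist_le_mul _ ⟨inCylK_iff.1 hz, mem_univ s⟩ _
        ⟨inCylK_iff.1 hw, mem_univ t⟩)
  · exact cylDist_eq_zero (hmem z hz 0).2.1.2 hz.2.1.2 (dist_glueCells_zero hψ (inCylK_iff.1 hz))
  · exact (glueCells_one hψ hk (inCylK_iff.1 hz)).imp (fun h ↦ (hmem z hz 1).inDZeroK hL h)
      inCylK_iff.2
  · exact cylDist_eq_zero (hmem z hz t).2.1.2 hz.2.1.2 <| dist_glueCells_eq_zero hψ hk
      (inCylK_iff.1 hz) (hz'.imp (fun h ↦ h.2.2.1) inCylK_iff.1) t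

/-- For a compact metric space with a finite good covering and `L > 6`,
for each `k ≥ 1` there is a Lipschitz strong deformation retraction `Φ^k` of `M(p^k)` onto
`(D^k × {0}) ∪ M(p^{k−1})`.  Everything is expressed on representatives, with equality in
`M(p^k)` expressed as vanishing of `cylDist`. -/
theorem skeleton_cylinder_lipSDR {M : Type*} [MetricSpace M] [CompactSpace M]
    {N : ℕ} (U : Fin N → Set M) (hU : IsGoodCovering U) (L : ℝ) (hL : 6 < L)
    (k : ℕ) (hk : 1 ≤ k) :
    ∃ (Φ : ((Fin N → ℝ) × M × ℝ) × unitInterval → (Fin N → ℝ) × M × ℝ) (K : NNReal),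
      (∀ z, InCylK U L k z → ∀ t : unitInterval, InCylK U L k (Φ (z, t))) ∧
      (∀ z w, InCylK U L k z → InCylK U L k w → ∀ s t : unitInterval,
        cylDist L (Φ (z, s)) (Φ (w, t)) ≤ K * max (cylDist L z w) (dist s t)) ∧
      (∀ z, InCylK U L k z → cylDist L (Φ (z, 0)) z = 0) ∧
      (∀ z, InCylK U L k z →
        (InDZeroK U k (Φ (z, 1)) ∨ InCylK U L (k - 1) (Φ (z, 1)))) ∧
      (∀ z, InCylK U L k z → (InDZeroK U k z ∨ InCylK U L (k - 1) z) →
        ∀ t : unitInterval, cylDist L (Φ (z, t)) z = 0) :=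
  skeleton_cylinder_lipSDR_general U L (by linarith) k hk fun s hs hV ↦
    hU.2.2.2.2 s (Finset.card_pos.1 (by lia)) hV
end
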